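/- Let Γ be a simplicial graph obtained from a single vertex by finitely many operations of the following two types: (i) attach a new 1-simplex or a new 2-simplex to the previously constructed graph Γ₀ by identifying exactly one of its vertices with a vertex of Γ₀; (ii) attach a new 2-simplex to Γ₀ by identifying exactly one of its 1-simplices with a 1-simplex of Γ₀. Then the right-angled Artin group π defined by Γ has tame cohomology: Hom_Λ(H²(π; Λ), Λ) = 0, Hom_Λ(H³(π; Λ), Λ) = 0, and Ext¹_Λ(H³(π; Λ), Λ) = 0. -/

import Mathlib

open Finset

/-- The integral group ring `ℤ[π]`. -/
abbrev GroupRing (π : Type) [Group π] : Type := MonoidAlgebra ℤ π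

variable (π : Type) [Group π]

/-- The differential of the inhomogeneous cochain complex computing the group cohomology
`H^*(π; M)` of a left `ℤ[π]`-module `M`. -/
noncomputable def cochainD (M : Type) [AddCommGroup M] [Module (GroupRing π) M] (n : ℕ) :
    ((Fin n → π) → M) →+ ((Fin (n + 1) → π) → M) where
  toFun f g := (MonoidAlgebra.single (g 0) (1 : ℤ)) • f (fun i => g i.succ)
      + ∑ j : Fin (n + 1), ((-1 : ℤ) ^ ((j : ℕ) + 1)) • f (Fin.contractNth j (· * ·) g)
  map_zero' := by
    funext g; simp
  map_add' f₁ f₂ := by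
    funext g
    simp only [Pi.add_apply, smul_add, Finset.sum_add_distrib]
    abel

/-- Inhomogeneous `n`-cocycles. -/
noncomputable def cocyclesGen (M : Type) [AddCommGroup M] [Module (GroupRing π) M] (n : ℕ) :
    AddSubgroup ((Fin n → π) → M) :=
  (cochainD π M n).ker

/-- Inhomogeneous `n`-coboundaries. -/
noncomputable def coboundariesGen (M : Type) [AddCommGroup M] [Module (GroupRing π) M] :
    (n : ℕ) → AddSubgroup ((Fin n → π) → M)
  | 0 => ⊥
  | (n + 1) => (cochainD π M n).range

/-- The group cohomology `H^n(π; M)`, as an abelian group. -/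
noncomputable def groupCoh (M : Type) [AddCommGroup M] [Module (GroupRing π) M] (n : ℕ) : Type :=
  (cocyclesGen π M n) ⧸ ((coboundariesGen π M n).addSubgroupOf (cocyclesGen π M n))

noncomputable instance (M : Type) [AddCommGroup M] [Module (GroupRing π) M] (n : ℕ) :
    AddCommGroup (groupCoh π M n) := by
  unfold groupCoh; infer_instance

/-- `cd π ≤ n` : the cohomological dimension of `π` is at most `n`, i.e. `H^i(π; M) = 0`
for all `i > n` and all `ℤ[π]`-modules `M`. -/
def cdLE (n : ℕ) : Prop :=
  ∀ (M : Type) (_ : AddCommGroup M) (_ : Module (GroupRing π) M) (i : ℕ), n < i →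
    Subsingleton (groupCoh π M i)

/-- `π` is a finitely presented group. -/
def IsFinitelyPresented : Prop :=
  ∃ (m : ℕ) (rels : Finset (FreeGroup (Fin m))),
    Nonempty (PresentedGroup (rels : Set (FreeGroup (Fin m))) ≃* π)

/-- The cochain differential with group ring coefficients is right `ℤ[π]`-linear
(where right modules are left modules over the opposite ring). -/
noncomputable def cochainDOp (n : ℕ) :
    ((Fin n → π) → GroupRing π) →ₗ[(GroupRing π)ᵐᵒᵖ] ((Fin (n + 1) → π) → GroupRing π) where
  toFun := cochainD π (GroupRing π) n
  map_add' := (cochainD π (GroupRing π) n).map_add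
  map_smul' a f := by
    funext g
    simp only [cochainD, AddMonoidHom.coe_mk, ZeroHom.coe_mk, Pi.smul_apply,
      MulOpposite.smul_eq_mul_unop, smul_eq_mul, RingHom.id_apply]
    rw [add_mul, Finset.sum_mul, ← mul_assoc]
    congr 1
    refine Finset.sum_congr rfl fun j _ => ?_
    rw [smul_mul_assoc]

/-- Cocycles with group ring coefficients, as a right `ℤ[π]`-submodule. -/
noncomputable def cocyclesΛ (n : ℕ) :
    Submodule (GroupRing π)ᵐᵒᵖ ((Fin n → π) → GroupRing π) :=
  LinearMap.ker (cochainDOp π n)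

/-- Coboundaries with group ring coefficients, as a right `ℤ[π]`-submodule. -/
noncomputable def coboundariesΛ :
    (n : ℕ) → Submodule (GroupRing π)ᵐᵒᵖ ((Fin n → π) → GroupRing π)
  | 0 => ⊥
  | (n + 1) => LinearMap.range (cochainDOp π n)

/-- The group cohomology `H^n(π; ℤ[π])` with group ring coefficients,
as a right `ℤ[π]`-module. -/
noncomputable def groupCohΛ (n : ℕ) : Type :=
  (cocyclesΛ π n) ⧸ ((coboundariesΛ π n).comap (cocyclesΛ π n).subtype)

noncomputable instance (n : ℕ) : AddCommGroup (groupCohΛ π n) := by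
  unfold groupCohΛ; infer_instance

noncomputable instance (n : ℕ) : Module (GroupRing π)ᵐᵒᵖ (groupCohΛ π n) := by
  unfold groupCohΛ; infer_instance

open CategoryTheory in
/-- `Ext^n` of (left) `S`-modules, as an abelian group: the value of Mathlib's
`Ext`-functor on the category of `S`-modules. -/
noncomputable def extGroup (S : Type) [Ring S] (A B : Type) [AddCommGroup A] [AddCommGroup B]
    [Module S A] [Module S B] (n : ℕ) : Type :=
  ((Ext ℤ (ModuleCat.{0} S) n).obj (Opposite.op (ModuleCat.of S A))).obj (ModuleCat.of S B)

noncomputable instance (S : Type) [Ring S] (A B : Type) [AddCommGroup A] [AddCommGroup B]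
    [Module S A] [Module S B] (n : ℕ) : AddCommGroup (extGroup S A B n) := by
  unfold extGroup; infer_instance

/-- The commutator relations defining a right-angled Artin group: one commutator
`[v, w] = v w v⁻¹ w⁻¹` for each edge `{v, w}` of the defining graph. -/
def raagRels (V : Type) (Γ : SimpleGraph V) : Set (FreeGroup V) :=
  {r | ∃ v w : V, Γ.Adj v w ∧
    r = FreeGroup.of v * FreeGroup.of w * (FreeGroup.of v)⁻¹ * (FreeGroup.of w)⁻¹}

/-- The right-angled Artin group defined by the simplicial graph `Γ`. -/
def RAAGroup (V : Type) (Γ : SimpleGraph V) : Type := PresentedGroup (raagRels V Γ)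

instance (V : Type) (Γ : SimpleGraph V) : Group (RAAGroup V Γ) :=
  inferInstanceAs (Group (PresentedGroup (raagRels V Γ)))

/-- The generator of a right-angled Artin group corresponding to a vertex. -/
def RAAGroup.of {V : Type} {Γ : SimpleGraph V} (v : V) : RAAGroup V Γ :=
  PresentedGroup.of v

/-- Simplicial graphs (with vertex set a finite subset of `ℕ`) obtained from a single vertex
by finitely many operations of: (i) attaching a new 1-simplex or 2-simplex by identifying
exactly one of its vertices with an existing vertex; (ii) attaching a new 2-simplex by
identifying exactly one of its 1-simplices with an existing 1-simplex. -/
inductive BuiltGraph : Finset ℕ → SimpleGraph ℕ → Prop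
  | single (v : ℕ) : BuiltGraph {v} ⊥
  | attachEdgeAtVertex (S : Finset ℕ) (Γ : SimpleGraph ℕ) (hS : BuiltGraph S Γ)
      (a b : ℕ) (ha : a ∈ S) (hb : b ∉ S) :
      BuiltGraph (insert b S) (Γ ⊔ SimpleGraph.fromEdgeSet {s(a, b)})
  | attachTriangleAtVertex (S : Finset ℕ) (Γ : SimpleGraph ℕ) (hS : BuiltGraph S Γ)
      (a b c : ℕ) (ha : a ∈ S) (hb : b ∉ S) (hc : c ∉ S) (hbc : b ≠ c) :
      BuiltGraph (insert b (insert c S))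
        (Γ ⊔ SimpleGraph.fromEdgeSet {s(a, b), s(a, c), s(b, c)})
  | attachTriangleAtEdge (S : Finset ℕ) (Γ : SimpleGraph ℕ) (hS : BuiltGraph S Γ)
      (a b c : ℕ) (ha : a ∈ S) (hb : b ∈ S) (hab : Γ.Adj a b) (hc : c ∉ S) :
      BuiltGraph (insert c S) (Γ ⊔ SimpleGraph.fromEdgeSet {s(a, c), s(b, c)})

/-!
A graph built in this way has no cliques on four vertices, so the chain complex of the universal
cover of the Salvetti complex of `π` has length three, with one generator in degree two for each
edge and one in degree three for each triangle. Following the construction of the graph shows that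
this complex is exact in degrees two and three: the labels `g - 1` of the generators behave like
regular sequences along cliques, since each generator has a dual character `π → ℤ`. Exactness in
degree one holds for every graph, by Fox calculus.

As `H³(π; Λ)` is the cokernel of the transpose of the injective differential `∂₃` of free modules
of finite rank, dualizing again identifies `Hom(H³, Λ)` with the kernel of `∂₃`, which is zero, and
exactness in degree two gives `Ext¹(H³, Λ) = 0`. For `H²`, an induction over the construction of
the graph needs a stronger claim: for each set `T` of edges, there is no nonzero functional on the
cocycles whose value at each edge `{a, b}` in `T` lies in the right ideal `(a - 1)Λ + (b - 1)Λ`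
which kills the coboundaries. Restriction to the smaller graph when a triangle is attached imposes
exactly this constraint on the shared edge.
-/
lemma mem_span_pair_mulOpposite {R : Type*} [Ring R] {a b y : R} :
    y ∈ Submodule.span Rᵐᵒᵖ {a, b} ↔ ∃ r s, a * r + b * s = y := by
  simp [Submodule.mem_span_pair, MulOpposite.exists]

section Regularity

variable {k G : Type*} [Ring k] [Monoid G]

/-- The element `g - 1` of a monoid algebra. -/
noncomputable def subOne (g : G) : MonoidAlgebra k G := MonoidAlgebra.single g 1 - 1

lemma subOne_commute {a b : G} (h : Commute a b) :
    Commute (subOne a : MonoidAlgebra k G) (subOne b) := by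
  have hab : Commute (MonoidAlgebra.single a (1 : k)) (MonoidAlgebra.single b 1) := by
    simp only [Commute, SemiconjBy, MonoidAlgebra.single_mul_single, h.eq]
  exact (hab.sub_left (Commute.one_left _)).sub_right (Commute.one_right _)

/-- The part of degree less than `N` of an element of a monoid algebra, for the grading defined
by a homomorphism `χ` to the integers. -/
noncomputable def truncBelow (χ : G →* Multiplicative ℤ) (N : ℤ) :
    MonoidAlgebra k G →+ MonoidAlgebra k G :=
  (MonoidAlgebra.coeffAddEquiv.symm.toAddMonoidHom.comp
    (Finsupp.filterAddHom fun g => (χ g).toAdd < N)).comp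
    MonoidAlgebra.coeffAddEquiv.toAddMonoidHom

variable {χ ω : G →* Multiplicative ℤ}

lemma truncBelow_single (N : ℤ) (g : G) (c : k) :
    truncBelow χ N (MonoidAlgebra.single g c) =
      if (χ g).toAdd < N then MonoidAlgebra.single g c else 0 := by
  split_ifs with h <;>
  · ext1
    simp [truncBelow, h, Finsupp.filterAddHom]

lemma eventually_truncBelow_eq_zero (χ : G →* Multiplicative ℤ) (x : MonoidAlgebra k G) :
    ∀ᶠ N in Filter.atBot, truncBelow χ N x = 0 := by
  induction x using MonoidAlgebra.induction_linear with
  | zero => simp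
  | add x y hx hy =>
    filter_upwards [hx, hy] with N hx hy
    rw [map_add, hx, hy, add_zero]
  | single g c =>
    filter_upwards [Filter.eventually_le_atBot (χ g).toAdd] with N hN
    rw [truncBelow_single, if_neg hN.not_gt]

lemma eventually_truncBelow_eq_self (χ : G →* Multiplicative ℤ) (x : MonoidAlgebra k G) :
    ∀ᶠ N in Filter.atTop, truncBelow χ N x = x := by
  induction x using MonoidAlgebra.induction_linear with
  | zero => simp
  | add x y hx hy =>
    filter_upwards [hx, hy] with N hx hy
    rw [map_add, hx, hy]
  | single g c =>
    filter_upwards [Filter.eventually_gt_atTop (χ g).toAdd] with N hN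
    rw [truncBelow_single, if_pos hN]

/-- An additive operator on a monoid algebra raises degrees by `d`; this is expressed through
truncations. -/
def IsHomogeneousOp (χ : G →* Multiplicative ℤ) (d : ℤ)
    (T : MonoidAlgebra k G →+ MonoidAlgebra k G) : Prop :=
  ∀ N x, truncBelow χ (N + d) (T x) = T (truncBelow χ N x)

lemma isHomogeneousOp_mulLeft {d : ℤ} {g : G} (hg : χ g = Multiplicative.ofAdd d) :
    IsHomogeneousOp χ d (AddMonoidHom.mulLeft (MonoidAlgebra.single g (1 : k))) := by
  intro N x
  induction x using MonoidAlgebra.induction_linear with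
  | zero => simp
  | add x y hx hy => simp only [map_add, hx, hy]
  | single h c =>
    have hdeg : (χ (g * h)).toAdd < N + d ↔ (χ h).toAdd < N := by
      rw [map_mul, hg, toAdd_mul, toAdd_ofAdd, add_comm, add_lt_add_iff_right]
    simp only [AddMonoidHom.coe_mulLeft, MonoidAlgebra.single_mul_single, truncBelow_single, hdeg]
    split_ifs <;> simp [MonoidAlgebra.single_mul_single]

lemma isHomogeneousOp_mulRight {d : ℤ} {g : G} (hg : χ g = Multiplicative.ofAdd d) :
    IsHomogeneousOp χ d (AddMonoidHom.mulRight (MonoidAlgebra.single g (1 : k))) := by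
  intro N x
  induction x using MonoidAlgebra.induction_linear with
  | zero => simp
  | add x y hx hy => simp only [map_add, hx, hy]
  | single h c =>
    have hdeg : (χ (h * g)).toAdd < N + d ↔ (χ h).toAdd < N := by
      rw [map_mul, hg, toAdd_mul, toAdd_ofAdd, add_lt_add_iff_right]
    simp only [AddMonoidHom.mulRight_apply, MonoidAlgebra.single_mul_single, truncBelow_single,
      hdeg]
    split_ifs <;> simp [MonoidAlgebra.single_mul_single]

variable {T U : MonoidAlgebra k G →+ MonoidAlgebra k G}

lemma IsHomogeneousOp.truncBelow_sub_id (hT : IsHomogeneousOp χ 0 T) (N : ℤ)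
    (x : MonoidAlgebra k G) :
    truncBelow χ N (T x - x) = T (truncBelow χ N x) - truncBelow χ N x := by
  rw [map_sub, ← hT N x, add_zero]

/-- Modulo `I`, the truncations of `x` below `N + 1` and of `x` below `N` differ by `T`, and the
latter vanish for small `N`. -/
lemma IsHomogeneousOp.mem_of_sub_self_mem (hT : IsHomogeneousOp χ 1 T)
    {I : AddSubgroup (MonoidAlgebra k G)} (hTI : ∀ x ∈ I, T x ∈ I)
    (hI : ∀ N, ∀ x ∈ I, truncBelow χ N x ∈ I) {x : MonoidAlgebra k G} (hx : T x - x ∈ I) :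
    x ∈ I := by
  have hstep : ∀ N, truncBelow χ N x ∈ I → truncBelow χ (N + 1) x ∈ I := fun N hN => by
    have hdiff := hI (N + 1) _ hx
    rw [map_sub, hT N x] at hdiff
    simpa using I.sub_mem (hTI _ hN) hdiff
  obtain ⟨m, hm⟩ := (eventually_truncBelow_eq_zero χ x).exists
  obtain ⟨M, hM, hmM⟩ :=
    ((eventually_truncBelow_eq_self χ x).and (Filter.eventually_ge_atTop m)).exists
  rw [← hM]
  clear hM
  induction M, hmM using Int.leInduction with
  | base => exact hm ▸ I.zero_mem
  | succ N _ ih => exact hstep N ih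

lemma IsHomogeneousOp.eq_zero_of_sub_self_eq_zero (hT : IsHomogeneousOp χ 1 T)
    {x : MonoidAlgebra k G} (hx : T x - x = 0) : x = 0 :=
  AddSubgroup.mem_bot.1 <|
    hT.mem_of_sub_self_mem (by simp) (by simp) (AddSubgroup.mem_bot.2 hx)

/-- Exactness of the Koszul complex of the commuting operators `T - 1` and `U - 1`. -/
lemma IsHomogeneousOp.exists_of_sub_self_eq_sub_self (hT : IsHomogeneousOp χ 1 T)
    (hU : IsHomogeneousOp ω 1 U) (hT' : IsHomogeneousOp ω 0 T) (hTU : ∀ x, T (U x) = U (T x))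
    {x y : MonoidAlgebra k G} (h : U x - x = T y - y) : ∃ t, x = T t - t ∧ y = U t - t := by
  obtain ⟨t, rfl⟩ : x ∈ (T - AddMonoidHom.id _).range := by
    refine hU.mem_of_sub_self_mem ?_ ?_ ⟨y, h.symm⟩
    · rintro _ ⟨z, rfl⟩
      exact ⟨U z, by simp [hTU]⟩
    · rintro N _ ⟨z, rfl⟩
      exact ⟨truncBelow ω N z, (hT'.truncBelow_sub_id N z).symm⟩
  simp only [AddMonoidHom.sub_apply, AddMonoidHom.id_apply] at h ⊢
  refine ⟨t, rfl, sub_eq_zero.1 (hT.eq_zero_of_sub_self_eq_zero ?_)⟩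
  rw [map_sub, sub_sub_sub_comm, ← h, map_sub, map_sub, hTU]
  abel

variable {a b c : G}

lemma eq_zero_of_mul_subOne_eq_zero (ha : χ a = Multiplicative.ofAdd 1) {x : MonoidAlgebra k G}
    (hx : x * subOne a = 0) : x = 0 :=
  (isHomogeneousOp_mulRight ha).eq_zero_of_sub_self_eq_zero
    (by simpa [subOne, mul_sub] using hx)

lemma exists_of_mul_subOne_eq (hab : Commute a b) (ha : χ a = Multiplicative.ofAdd 1)
    (hb : ω b = Multiplicative.ofAdd 1) (hωa : ω a = 1) {x y : MonoidAlgebra k G}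
    (h : x * subOne b = y * subOne a) : ∃ t, x = t * subOne a ∧ y = t * subOne b := by
  obtain ⟨t, hx, hy⟩ := (isHomogeneousOp_mulRight ha).exists_of_sub_self_eq_sub_self
    (isHomogeneousOp_mulRight hb) (isHomogeneousOp_mulRight (d := 0) hωa)
    (fun x => by simp [mul_assoc, MonoidAlgebra.single_mul_single, hab.eq])
    (x := x) (y := y) (by simpa [subOne, mul_sub] using h)
  exact ⟨t, by simpa [subOne, mul_sub] using hx, by simpa [subOne, mul_sub] using hy⟩

lemma exists_of_subOne_mul_eq (hab : Commute a b) (ha : χ a = Multiplicative.ofAdd 1)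
    (hb : ω b = Multiplicative.ofAdd 1) (hωa : ω a = 1) {x y : MonoidAlgebra k G}
    (h : subOne b * x = subOne a * y) : ∃ t, x = subOne a * t ∧ y = subOne b * t := by
  obtain ⟨t, hx, hy⟩ := (isHomogeneousOp_mulLeft ha).exists_of_sub_self_eq_sub_self
    (isHomogeneousOp_mulLeft hb) (isHomogeneousOp_mulLeft (d := 0) hωa)
    (fun x => by simp [← mul_assoc, MonoidAlgebra.single_mul_single, hab.eq])
    (x := x) (y := y) (by simpa [subOne, sub_mul] using h)
  exact ⟨t, by simpa [subOne, sub_mul] using hx, by simpa [subOne, sub_mul] using hy⟩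

lemma mem_span_of_subOne_mul_mem (hac : Commute a c) (hbc : Commute b c) (ha : χ a = 1)
    (hb : χ b = 1) (hc : χ c = Multiplicative.ofAdd 1) {x : MonoidAlgebra k G}
    (h : subOne c * x ∈ Submodule.span (MonoidAlgebra k G)ᵐᵒᵖ {subOne a, subOne b}) :
    x ∈ Submodule.span (MonoidAlgebra k G)ᵐᵒᵖ {subOne a, subOne b} := by
  have htrunc : ∀ {g : G}, χ g = 1 → ∀ N (z : MonoidAlgebra k G),
      truncBelow χ N (subOne g * z) = subOne g * truncBelow χ N z := fun hg N z => by
    simpa [subOne, sub_mul] using (isHomogeneousOp_mulLeft (d := 0) hg).truncBelow_sub_id N z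
  have hcomm : ∀ {g : G}, Commute g c → ∀ z : MonoidAlgebra k G,
      MonoidAlgebra.single c 1 * (subOne g * z) = subOne g * (MonoidAlgebra.single c 1 * z) :=
    fun hg z => by
      simp [subOne, sub_mul, mul_sub, ← mul_assoc, MonoidAlgebra.single_mul_single, hg.eq]
  refine (isHomogeneousOp_mulLeft hc).mem_of_sub_self_mem
    (I := (Submodule.span (MonoidAlgebra k G)ᵐᵒᵖ {subOne a, subOne b}).toAddSubgroup) ?_ ?_
    (by simpa [subOne, sub_mul] using h)
  · intro y hy
    obtain ⟨r, s, rfl⟩ := mem_span_pair_mulOpposite.1 hy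
    exact mem_span_pair_mulOpposite.2 ⟨.single c 1 * r, .single c 1 * s,
      by rw [AddMonoidHom.coe_mulLeft, mul_add, hcomm hac, hcomm hbc]⟩
  · intro N y hy
    obtain ⟨r, s, rfl⟩ := mem_span_pair_mulOpposite.1 hy
    exact mem_span_pair_mulOpposite.2 ⟨truncBelow χ N r, truncBelow χ N s,
      by rw [map_add, htrunc ha, htrunc hb]⟩

end Regularity
section Factorization

variable {R P Q M N : Type*} [Ring R] [AddCommGroup P] [Module R P] [AddCommGroup Q] [Module R Q]
  [AddCommGroup M] [Module R M] [AddCommGroup N] [Module R N]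

lemma exists_comp_eq_of_ker_le {f : M →ₗ[R] N} (hf : Function.Surjective f) {g : M →ₗ[R] Q}
    (h : LinearMap.ker f ≤ LinearMap.ker g) : ∃ k : N →ₗ[R] Q, k ∘ₗ f = g :=
  ⟨(LinearMap.ker f).liftQ g h ∘ₗ (f.quotKerEquivOfSurjective hf).symm.toLinearMap,
    LinearMap.ext fun x => by simp [LinearMap.quotKerEquivOfSurjective_symm_apply]⟩

lemma exists_comp_eq_of_range_le [Module.Projective R P] {f : M →ₗ[R] N} {g : P →ₗ[R] N}
    (h : LinearMap.range g ≤ LinearMap.range f) : ∃ k : P →ₗ[R] M, f ∘ₗ k = g := by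
  obtain ⟨k, hk⟩ := Module.projective_lifting_property f.rangeRestrict
    (g.codRestrict (LinearMap.range f) fun x => h ⟨x, rfl⟩) f.surjective_rangeRestrict
  exact ⟨k, LinearMap.ext fun x => congrArg Subtype.val (LinearMap.congr_fun hk x)⟩

lemma exists_comp_eq_of_exact [Module.Projective R P] {f : M →ₗ[R] N} {g : N →ₗ[R] Q}
    (hfg : Function.Exact f g) {u : P →ₗ[R] N} (hu : g ∘ₗ u = 0) : ∃ k : P →ₗ[R] M, f ∘ₗ k = u :=
  exists_comp_eq_of_range_le (hfg.linearMap_ker_eq ▸ LinearMap.range_le_ker_iff.2 hu)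

end Factorization

section ExtOne

/-- By Schanuel's trick: compare the two presentations by lifts `α : P' → P` and `β : P → P'`, and
correct the extension of `G ∘ β` along `α` by `G ∘ (β ∘ α - 1)`. -/
lemma exists_extension_of_presentation {R A B P P' : Type*} [Ring R] [AddCommGroup A]
    [AddCommGroup B] [AddCommGroup P] [AddCommGroup P'] [Module R A] [Module R B] [Module R P]
    [Module R P'] [Module.Projective R P] [Module.Projective R P'] {q : P →ₗ[R] A}
    (hq : Function.Surjective q) {q' : P' →ₗ[R] A} (hq' : Function.Surjective q')
    (hext : ∀ G : LinearMap.ker q →ₗ[R] B, ∃ F : P →ₗ[R] B, F ∘ₗ (LinearMap.ker q).subtype = G)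
    (G : LinearMap.ker q' →ₗ[R] B) : ∃ F : P' →ₗ[R] B, F ∘ₗ (LinearMap.ker q').subtype = G := by
  obtain ⟨α, hα⟩ := Module.projective_lifting_property q q' hq
  obtain ⟨β, hβ⟩ := Module.projective_lifting_property q' q hq'
  replace hα : ∀ x, q (α x) = q' x := LinearMap.congr_fun hα
  replace hβ : ∀ x, q' (β x) = q x := LinearMap.congr_fun hβ
  obtain ⟨F, hF⟩ := hext (G ∘ₗ (β ∘ₗ (LinearMap.ker q).subtype).codRestrict _
    fun k => by simp [hβ])
  let γ : P' →ₗ[R] LinearMap.ker q' := (β ∘ₗ α - LinearMap.id).codRestrict _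
    fun x => by simp [hβ, hα]
  refine ⟨F ∘ₗ α - G ∘ₗ γ, LinearMap.ext fun k => ?_⟩
  have hFα : F (α k) = _ := LinearMap.congr_fun hF ⟨α k, by simp [hα]⟩
  simp only [LinearMap.sub_apply, LinearMap.comp_apply, Submodule.subtype_apply, hFα, ← map_sub]
  exact congrArg G (Subtype.ext (sub_sub_cancel (β (α k)) (k : P')))

lemma exists_comp_eq_of_resolution {R A B P P₀ P₁ P₂ : Type*} [Ring R] [AddCommGroup A]
    [AddCommGroup B] [AddCommGroup P] [AddCommGroup P₀] [AddCommGroup P₁] [AddCommGroup P₂]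
    [Module R A] [Module R B] [Module R P] [Module R P₀] [Module R P₁] [Module R P₂]
    [Module.Projective R P] [Module.Projective R P₀] {q : P →ₗ[R] A} (hq : Function.Surjective q)
    (hext : ∀ G : LinearMap.ker q →ₗ[R] B, ∃ F : P →ₗ[R] B, F ∘ₗ (LinearMap.ker q).subtype = G)
    {p : P₀ →ₗ[R] A} (hp : Function.Surjective p) {d₁ : P₁ →ₗ[R] P₀} (hd₁ : Function.Exact d₁ p)
    {d₂ : P₂ →ₗ[R] P₁} (hd₂ : Function.Exact d₂ d₁) {x : P₁ →ₗ[R] B} (hx : x ∘ₗ d₂ = 0) :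
    ∃ y : P₀ →ₗ[R] B, y ∘ₗ d₁ = x := by
  let D : P₁ →ₗ[R] LinearMap.ker p := d₁.codRestrict _ hd₁.apply_apply_eq_zero
  have hD : Function.Surjective D := fun v => by
    obtain ⟨w, hw⟩ := (hd₁ v).1 v.2
    exact ⟨w, Subtype.ext hw⟩
  obtain ⟨G, hG⟩ := exists_comp_eq_of_ker_le hD (g := x) <| by
    have hDker : LinearMap.ker D = LinearMap.range d₂ :=
      (d₁.ker_codRestrict _ _).trans hd₂.linearMap_ker_eq
    exact hDker.trans_le (LinearMap.range_le_ker_iff.2 hx)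
  obtain ⟨F, hF⟩ := exists_extension_of_presentation hq hp hext G
  exact ⟨F, by rw [← hG, ← hF]; rfl⟩

open CategoryTheory in
lemma subsingleton_extGroup_one {R A B P : Type} [Ring R] [AddCommGroup A] [AddCommGroup B]
    [AddCommGroup P] [Module R A] [Module R B] [Module R P] [Module.Projective R P]
    {q : P →ₗ[R] A} (hq : Function.Surjective q)
    (hext : ∀ G : LinearMap.ker q →ₗ[R] B, ∃ F : P →ₗ[R] B, F ∘ₗ (LinearMap.ker q).subtype = G) :
    Subsingleton (extGroup R A B 1) := by
  let K := projectiveResolution (ModuleCat.of R A)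
  suffices h : Limits.IsZero ((K.complex.linearYonedaObj ℤ (ModuleCat.of R B)).homology 1) from
    ModuleCat.subsingleton_of_isZero (h.of_iso (K.isoExt 1 (ModuleCat.of R B)))
  rw [← HomologicalComplex.exactAt_iff_isZero_homology,
    HomologicalComplex.exactAt_iff' _ 0 1 2 (by simp) (by simp), ShortComplex.moduleCat_exact_iff]
  intro (x : K.complex.X 1 ⟶ ModuleCat.of R B) (hx : K.complex.d 2 1 ≫ x = 0)
  have hproj : Module.Projective R (K.complex.X 0) :=
    (IsProjective.iff_projective _).2 (K.projective 0)
  have hsurj : Function.Surjective (K.π.f 0).hom :=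
    (ModuleCat.epi_iff_surjective _).1 inferInstance
  have hd₁ : Function.Exact (K.complex.d 1 0).hom (K.π.f 0).hom :=
    (ShortComplex.ShortExact.moduleCat_exact_iff_function_exact _).1 K.exact₀
  have hd₂ : Function.Exact (K.complex.d 2 1).hom (K.complex.d 1 0).hom :=
    (ShortComplex.ShortExact.moduleCat_exact_iff_function_exact _).1 (K.exact_succ 0)
  obtain ⟨y, hy⟩ := exists_comp_eq_of_resolution hq hext hsurj hd₁ hd₂ (x := x.hom)
    (congrArg ModuleCat.Hom.hom hx)
  exact ⟨ModuleCat.ofHom y, ModuleCat.hom_ext hy⟩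

end ExtOne

section Transpose

variable {R A B C : Type*} [Ring R]

/-- The functional on the right module dual to a free left module given by evaluation at `x`. The
dual of `A →₀ R` is encoded as `A → R`, the values of a functional on the basis. -/
noncomputable def dualEval (x : A →₀ R) : (A → R) →ₗ[Rᵐᵒᵖ] R where
  toFun z := Finsupp.linearCombination R z x
  map_add' z w := by
    simp [Finsupp.linearCombination_apply, Finsupp.sum, mul_add, Finset.sum_add_distrib]
  map_smul' r z := by
    simp [Finsupp.linearCombination_apply, Finsupp.sum, Finset.sum_mul, mul_assoc]

lemma dualEval_apply (x : A →₀ R) (z : A → R) :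
    dualEval x z = Finsupp.linearCombination R z x := rfl

lemma dualEval_zero : dualEval (0 : A →₀ R) = 0 :=
  LinearMap.ext fun z => map_zero (Finsupp.linearCombination R z)

/-- The map of right modules dual to a map of free left modules. -/
noncomputable def transpose (f : (A →₀ R) →ₗ[R] (B →₀ R)) : (B → R) →ₗ[Rᵐᵒᵖ] (A → R) :=
  LinearMap.pi fun a => dualEval (f (Finsupp.single a 1))

lemma transpose_apply (f : (A →₀ R) →ₗ[R] (B →₀ R)) (z : B → R) (a : A) :
    transpose f z a = Finsupp.linearCombination R z (f (Finsupp.single a 1)) := rfl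

lemma dualEval_comp_transpose (f : (A →₀ R) →ₗ[R] (B →₀ R)) (x : A →₀ R) :
    dualEval x ∘ₗ transpose f = dualEval (f x) := by
  ext z
  suffices h : Finsupp.linearCombination R (transpose f z) = Finsupp.linearCombination R z ∘ₗ f from
    LinearMap.congr_fun h x
  ext a
  simp [transpose_apply]

lemma transpose_comp (g : (B →₀ R) →ₗ[R] (C →₀ R)) (f : (A →₀ R) →ₗ[R] (B →₀ R)) :
    transpose (g ∘ₗ f) = transpose f ∘ₗ transpose g :=
  LinearMap.ext fun z => funext fun a =>
    (LinearMap.congr_fun (dualEval_comp_transpose g (f (Finsupp.single a 1))) z).symm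

lemma transpose_id : transpose (LinearMap.id : (A →₀ R) →ₗ[R] (A →₀ R)) = LinearMap.id :=
  LinearMap.ext fun z => funext fun a => by simp [transpose_apply]

lemma transpose_add (f g : (A →₀ R) →ₗ[R] (B →₀ R)) :
    transpose (f + g) = transpose f + transpose g :=
  LinearMap.ext fun z => funext fun a => by simp [transpose_apply]

lemma transpose_sub (f g : (A →₀ R) →ₗ[R] (B →₀ R)) :
    transpose (f - g) = transpose f - transpose g :=
  LinearMap.ext fun z => funext fun a => by simp [transpose_apply]

lemma transpose_zero : transpose (0 : (A →₀ R) →ₗ[R] (B →₀ R)) = 0 :=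
  LinearMap.ext fun z => funext fun a => by simp [transpose_apply]

end Transpose

section DoubleDual

variable {R A T E V : Type*} [Ring R] [AddCommGroup A] [Module Rᵐᵒᵖ A]

instance projective_pi_mulOpposite [Finite T] : Module.Projective Rᵐᵒᵖ (T → R) := by
  have : Module.Free Rᵐᵒᵖ R := Module.Free.of_equiv
    ({ (MulOpposite.opAddEquiv (α := R)).symm with map_smul' := fun _ _ => rfl } :
      Rᵐᵒᵖ ≃ₗ[Rᵐᵒᵖ] R)
  infer_instance

lemma eq_zero_of_dualEval_eq_zero {x : T →₀ R} (h : dualEval x = 0) : x = 0 := by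
  classical
  ext t
  simpa [dualEval_apply, Finsupp.linearCombination_apply, Finsupp.sum, Pi.single_apply]
    using LinearMap.congr_fun h (Pi.single t 1)

lemma exists_dualEval_eq [Finite T] (F : (T → R) →ₗ[Rᵐᵒᵖ] R) : ∃ x, dualEval x = F := by
  classical
  have := Fintype.ofFinite T
  refine ⟨Finsupp.equivFunOnFinite.symm fun t => F (Pi.single t 1), LinearMap.ext fun z => ?_⟩
  have hz : z = ∑ t, MulOpposite.op (z t) • Pi.single t (1 : R) := by
    simp [← Pi.single_smul, Finset.univ_sum_single]
  conv_rhs => rw [hz]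
  simp [dualEval_apply, Finsupp.linearCombination_apply, Finsupp.sum_fintype]

variable {q : (T → R) →ₗ[Rᵐᵒᵖ] A} {d : (T →₀ R) →ₗ[R] (E →₀ R)}

lemma eq_zero_of_ker_eq_range_transpose [Finite T] (hd : Function.Injective d)
    (hq : Function.Surjective q) (hker : LinearMap.ker q = LinearMap.range (transpose d))
    (f : A →ₗ[Rᵐᵒᵖ] R) : f = 0 := by
  obtain ⟨x, hx⟩ := exists_dualEval_eq (f ∘ₗ q)
  have hqd : q ∘ₗ transpose d = 0 := LinearMap.range_le_ker_iff.1 hker.ge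
  have hdx : d x = 0 := eq_zero_of_dualEval_eq_zero <| by
    rw [← dualEval_comp_transpose, hx, LinearMap.comp_assoc, hqd, LinearMap.comp_zero]
  obtain rfl : x = 0 := hd (hdx.trans (map_zero d).symm)
  rw [← LinearMap.cancel_right hq, ← hx, dualEval_zero, LinearMap.zero_comp]

/-- After composition with the transpose of `d`, a functional `G` on its image is evaluation at
some `x`; then `x` is a cycle, hence `x = d w`, and evaluation at `w` extends `G`. -/
lemma exists_extension_of_ker_eq_range_transpose [Finite E]
    {d' : (E →₀ R) →ₗ[R] (V →₀ R)} (hd : Function.Exact d d')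
    (hker : LinearMap.ker q = LinearMap.range (transpose d)) (G : LinearMap.ker q →ₗ[Rᵐᵒᵖ] R) :
    ∃ F : (T → R) →ₗ[Rᵐᵒᵖ] R, F ∘ₗ (LinearMap.ker q).subtype = G := by
  let dDual : (E → R) →ₗ[Rᵐᵒᵖ] LinearMap.ker q :=
    (transpose d).codRestrict _ fun z => hker.ge ⟨z, rfl⟩
  obtain ⟨x, hx⟩ := exists_dualEval_eq (G ∘ₗ dDual)
  have hdd' : dDual ∘ₗ transpose d' = 0 := LinearMap.ext fun z => Subtype.ext <| by
    change (transpose d ∘ₗ transpose d') z = 0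
    rw [← transpose_comp, hd.linearMap_comp_eq_zero, transpose_zero, LinearMap.zero_apply]
  have hd'x : d' x = 0 := eq_zero_of_dualEval_eq_zero <| by
    rw [← dualEval_comp_transpose, hx, LinearMap.comp_assoc, hdd', LinearMap.comp_zero]
  obtain ⟨w, rfl⟩ := (hd x).1 hd'x
  refine ⟨dualEval w, LinearMap.ext fun ⟨k, hk⟩ => ?_⟩
  obtain ⟨z, rfl⟩ := hker.le hk
  rw [← dualEval_comp_transpose] at hx
  exact LinearMap.congr_fun hx z

end DoubleDual
section Bar

/-- The differential of the bar resolution, with the bar resolution in degree `n` encoded as the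
free module on `Fin n → π`: it is the cochain differential with coefficients in this module, applied
to the cochain of basis elements. -/
noncomputable def barD (n : ℕ) :
    ((Fin (n + 1) → π) →₀ GroupRing π) →ₗ[GroupRing π] ((Fin n → π) →₀ GroupRing π) :=
  Finsupp.linearCombination (GroupRing π)
    (cochainD π ((Fin n → π) →₀ GroupRing π) n fun u => Finsupp.single u 1)

lemma barD_single (n : ℕ) (u : Fin (n + 1) → π) :
    barD π n (Finsupp.single u 1) =
      Finsupp.single (fun i => u i.succ) (MonoidAlgebra.single (u 0) 1) +
        ∑ j : Fin (n + 1),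
          (-1 : ℤ) ^ ((j : ℕ) + 1) • Finsupp.single (j.contractNth (· * ·) u) 1 := by
  simp [barD, cochainD]

lemma transpose_barD (n : ℕ) : transpose (barD π n) = cochainDOp π n :=
  LinearMap.ext fun z => funext fun u => by
    simp [transpose_apply, barD_single, cochainDOp, cochainD]

lemma free_apply (α : Type) (h : π) (x : α →₀ GroupRing π) :
    Representation.free ℤ π α h x = MonoidAlgebra.single h (1 : ℤ) • x := by
  suffices Representation.free ℤ π α h = DistribSMul.toLinearMap ℤ (α →₀ GroupRing π)
      (MonoidAlgebra.single h (1 : ℤ)) from LinearMap.congr_fun this x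
  ext : 3
  simp

lemma toLinearMap_barComplex_d (n : ℕ) :
    (Rep.barComplex.d ℤ π n).hom.toLinearMap = (barD π n).restrictScalars ℤ := by
  let D : (Representation.free ℤ π (Fin (n + 1) → π)).IntertwiningMap
      (Representation.free ℤ π (Fin n → π)) :=
    ⟨(barD π n).restrictScalars ℤ, fun h => LinearMap.ext fun x => by
      simp only [LinearMap.comp_apply, LinearMap.restrictScalars_apply, free_apply, map_smul]⟩
  suffices h : (Rep.barComplex.d ℤ π n).hom = D from
    congrArg Representation.IntertwiningMap.toLinearMap h
  refine (Representation.freeLiftLEquiv _ _).injective (funext fun u => ?_)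
  refine Eq.trans ?_ (barD_single π n u).symm
  simp [Rep.barComplex.d, MonoidAlgebra.one_def,
    ← Representation.IntertwiningMap.toLinearMap_apply]

open CategoryTheory in
lemma barComplex_d_exact (k G : Type) [CommRing k] [Group G] (n : ℕ) :
    Function.Exact (Rep.barComplex.d k G (n + 1)).hom.toLinearMap
      (Rep.barComplex.d k G n).hom.toLinearMap := by
  rw [← Rep.barComplex.d_def, ← Rep.barComplex.d_def]
  exact (ShortComplex.ShortExact.moduleCat_exact_iff_function_exact _).1
    (((Rep.barResolution k G).exact_succ n).map (forget₂ (Rep.{0} k G) (ModuleCat.{0} k)))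

lemma barD_exact (n : ℕ) : Function.Exact (barD π (n + 1)) (barD π n) := by
  have h := barComplex_d_exact ℤ π n
  rwa [toLinearMap_barComplex_d, toLinearMap_barComplex_d] at h

end Bar
section Comparison

variable {R M P₁ P₂ P₃ P₄ Q₁ Q₂ Q₃ : Type*} [Ring R] [AddCommGroup M] [Module R M]
  [AddCommGroup P₁] [Module R P₁] [AddCommGroup P₂] [Module R P₂] [AddCommGroup P₃] [Module R P₃]
  [AddCommGroup P₄] [Module R P₄] [AddCommGroup Q₁] [Module R Q₁] [AddCommGroup Q₂] [Module R Q₂]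
  [AddCommGroup Q₃] [Module R Q₃]

/-- Comparison maps between two complexes of modules, given by `p₂`, `p₃`, `p₄` and by `q₂`, `q₃`:
chain maps `f` and `g` which are mutually inverse up to the homotopies `h` and `k`. It has just the
data in degrees one to three that determine second and third cohomology. -/
structure ComplexComparison (p₂ : P₂ →ₗ[R] P₁) (p₃ : P₃ →ₗ[R] P₂) (p₄ : P₄ →ₗ[R] P₃)
    (q₂ : Q₂ →ₗ[R] Q₁) (q₃ : Q₃ →ₗ[R] Q₂) where
  f₁ : P₁ →ₗ[R] Q₁
  f₂ : P₂ →ₗ[R] Q₂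
  f₃ : P₃ →ₗ[R] Q₃
  g₂ : Q₂ →ₗ[R] P₂
  g₃ : Q₃ →ₗ[R] P₃
  h₁ : P₁ →ₗ[R] P₂
  h₂ : P₂ →ₗ[R] P₃
  h₃ : P₃ →ₗ[R] P₄
  k : Q₂ →ₗ[R] Q₃
  q₂_f₂ : q₂ ∘ₗ f₂ = f₁ ∘ₗ p₂
  q₃_f₃ : q₃ ∘ₗ f₃ = f₂ ∘ₗ p₃
  p₃_g₃ : p₃ ∘ₗ g₃ = g₂ ∘ₗ q₃
  id_sub_g₂_f₂ : LinearMap.id - g₂ ∘ₗ f₂ = p₃ ∘ₗ h₂ + h₁ ∘ₗ p₂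
  id_sub_g₃_f₃ : LinearMap.id - g₃ ∘ₗ f₃ = p₄ ∘ₗ h₃ + h₂ ∘ₗ p₃
  id_sub_f₃_g₃ : LinearMap.id - f₃ ∘ₗ g₃ = k ∘ₗ q₃

variable [Module.Projective R P₁] [Module.Projective R P₂] [Module.Projective R P₃]

lemma exists_chainMap {p₁ : P₁ →ₗ[R] M} {p₂ : P₂ →ₗ[R] P₁} {p₃ : P₃ →ₗ[R] P₂} {q₁ : Q₁ →ₗ[R] M}
    {q₂ : Q₂ →ₗ[R] Q₁} {q₃ : Q₃ →ₗ[R] Q₂} (hp₂ : p₁ ∘ₗ p₂ = 0) (hp₃ : p₂ ∘ₗ p₃ = 0)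
    (hq₂ : Function.Exact q₂ q₁) (hq₃ : Function.Exact q₃ q₂)
    (h : LinearMap.range p₁ ≤ LinearMap.range q₁) :
    ∃ (f₁ : P₁ →ₗ[R] Q₁) (f₂ : P₂ →ₗ[R] Q₂) (f₃ : P₃ →ₗ[R] Q₃),
      q₁ ∘ₗ f₁ = p₁ ∧ q₂ ∘ₗ f₂ = f₁ ∘ₗ p₂ ∧ q₃ ∘ₗ f₃ = f₂ ∘ₗ p₃ := by
  obtain ⟨f₁, hf₁⟩ := exists_comp_eq_of_range_le h
  obtain ⟨f₂, hf₂⟩ := exists_comp_eq_of_exact hq₂ (u := f₁ ∘ₗ p₂) <| by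
    rw [← LinearMap.comp_assoc, hf₁, hp₂]
  obtain ⟨f₃, hf₃⟩ := exists_comp_eq_of_exact hq₃ (u := f₂ ∘ₗ p₃) <| by
    rw [← LinearMap.comp_assoc, hf₂, LinearMap.comp_assoc, hp₃, LinearMap.comp_zero]
  exact ⟨f₁, f₂, f₃, hf₁, hf₂, hf₃⟩

lemma exists_homotopy {p₁ : P₁ →ₗ[R] M} {p₂ : P₂ →ₗ[R] P₁} {p₃ : P₃ →ₗ[R] P₂}
    {p₄ : P₄ →ₗ[R] P₃} (hp₂ : Function.Exact p₂ p₁) (hp₃ : Function.Exact p₃ p₂)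
    (hp₄ : Function.Exact p₄ p₃) {u₁ : P₁ →ₗ[R] P₁} {u₂ : P₂ →ₗ[R] P₂} {u₃ : P₃ →ₗ[R] P₃}
    (hu₁ : p₁ ∘ₗ u₁ = p₁) (hu₂ : p₂ ∘ₗ u₂ = u₁ ∘ₗ p₂) (hu₃ : p₃ ∘ₗ u₃ = u₂ ∘ₗ p₃) :
    ∃ (h₁ : P₁ →ₗ[R] P₂) (h₂ : P₂ →ₗ[R] P₃) (h₃ : P₃ →ₗ[R] P₄),
      LinearMap.id - u₂ = p₃ ∘ₗ h₂ + h₁ ∘ₗ p₂ ∧ LinearMap.id - u₃ = p₄ ∘ₗ h₃ + h₂ ∘ₗ p₃ := by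
  obtain ⟨h₁, hh₁⟩ := exists_comp_eq_of_exact hp₂ (u := LinearMap.id - u₁) <| by
    rw [LinearMap.comp_sub, hu₁, LinearMap.comp_id, sub_self]
  obtain ⟨h₂, hh₂⟩ := exists_comp_eq_of_exact hp₃ (u := LinearMap.id - u₂ - h₁ ∘ₗ p₂) <| by
    rw [LinearMap.comp_sub, ← LinearMap.comp_assoc, hh₁, LinearMap.comp_sub, LinearMap.sub_comp,
      hu₂, LinearMap.comp_id, LinearMap.id_comp, sub_self]
  obtain ⟨h₃, hh₃⟩ := exists_comp_eq_of_exact hp₄ (u := LinearMap.id - u₃ - h₂ ∘ₗ p₃) <| by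
    rw [LinearMap.comp_sub, ← LinearMap.comp_assoc, hh₂, LinearMap.comp_sub, LinearMap.sub_comp,
      LinearMap.sub_comp, LinearMap.comp_assoc, hp₃.linearMap_comp_eq_zero, hu₃,
      LinearMap.comp_zero, sub_zero, LinearMap.comp_id, LinearMap.id_comp, sub_self]
  exact ⟨h₁, h₂, h₃, by rw [hh₂, sub_add_cancel], by rw [hh₃, sub_add_cancel]⟩

lemma nonempty_complexComparison [Module.Projective R Q₁] [Module.Projective R Q₂]
    [Module.Projective R Q₃] {p₁ : P₁ →ₗ[R] M} {p₂ : P₂ →ₗ[R] P₁} {p₃ : P₃ →ₗ[R] P₂}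
    {p₄ : P₄ →ₗ[R] P₃} {q₁ : Q₁ →ₗ[R] M} {q₂ : Q₂ →ₗ[R] Q₁} {q₃ : Q₃ →ₗ[R] Q₂}
    (hp₂ : Function.Exact p₂ p₁) (hp₃ : Function.Exact p₃ p₂) (hp₄ : Function.Exact p₄ p₃)
    (hq₂ : Function.Exact q₂ q₁) (hq₃ : Function.Exact q₃ q₂) (hq₄ : Function.Injective q₃)
    (h : LinearMap.range p₁ = LinearMap.range q₁) :
    Nonempty (ComplexComparison p₂ p₃ p₄ q₂ q₃) := by
  obtain ⟨f₁, f₂, f₃, hf₁, hf₂, hf₃⟩ := exists_chainMap hp₂.linearMap_comp_eq_zero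
    hp₃.linearMap_comp_eq_zero hq₂ hq₃ h.le
  obtain ⟨g₁, g₂, g₃, hg₁, hg₂, hg₃⟩ := exists_chainMap hq₂.linearMap_comp_eq_zero
    hq₃.linearMap_comp_eq_zero hp₂ hp₃ h.ge
  obtain ⟨h₁, h₂, h₃, hh₂, hh₃⟩ := exists_homotopy hp₂ hp₃ hp₄ (u₁ := g₁ ∘ₗ f₁)
    (u₂ := g₂ ∘ₗ f₂) (u₃ := g₃ ∘ₗ f₃)
    (by rw [← LinearMap.comp_assoc, hg₁, hf₁])
    (by rw [← LinearMap.comp_assoc, hg₂, LinearMap.comp_assoc, hf₂, LinearMap.comp_assoc])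
    (by rw [← LinearMap.comp_assoc, hg₃, LinearMap.comp_assoc, hf₃, LinearMap.comp_assoc])
  have hq₄' : Function.Exact (0 : PUnit →ₗ[R] Q₃) q₃ := fun x => by
    simpa [eq_comm] using map_eq_zero_iff q₃ hq₄
  obtain ⟨-, k, k₃, -, hk⟩ := exists_homotopy hq₂ hq₃ hq₄' (u₁ := f₁ ∘ₗ g₁)
    (u₂ := f₂ ∘ₗ g₂) (u₃ := f₃ ∘ₗ g₃)
    (by rw [← LinearMap.comp_assoc, hf₁, hg₁])
    (by rw [← LinearMap.comp_assoc, hf₂, LinearMap.comp_assoc, hg₂, LinearMap.comp_assoc])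
    (by rw [← LinearMap.comp_assoc, hf₃, LinearMap.comp_assoc, hg₃, LinearMap.comp_assoc])
  exact ⟨f₁, f₂, f₃, g₂, g₃, h₁, h₂, h₃, k, hf₂, hf₃, hg₃, hh₂, hh₃,
    by rw [hk, LinearMap.zero_comp, zero_add]⟩

section Dual

variable {A₁ A₂ A₃ A₄ V E T : Type*} {d₂ : (A₂ →₀ R) →ₗ[R] (A₁ →₀ R)}
  {d₃ : (A₃ →₀ R) →ₗ[R] (A₂ →₀ R)} {d₄ : (A₄ →₀ R) →ₗ[R] (A₃ →₀ R)} {b₂ : (E →₀ R) →ₗ[R] (V →₀ R)}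
  {b₃ : (T →₀ R) →ₗ[R] (E →₀ R)} (K : ComplexComparison d₂ d₃ d₄ b₂ b₃)

namespace ComplexComparison

lemma transpose_f₂_b₂ (y : V → R) :
    transpose K.f₂ (transpose b₂ y) = transpose d₂ (transpose K.f₁ y) := by
  have h := congrArg transpose K.q₂_f₂
  rw [transpose_comp, transpose_comp] at h
  exact LinearMap.congr_fun h y

lemma transpose_f₃_b₃ (y : E → R) :
    transpose K.f₃ (transpose b₃ y) = transpose d₃ (transpose K.f₂ y) := by
  have h := congrArg transpose K.q₃_f₃
  rw [transpose_comp, transpose_comp] at h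
  exact LinearMap.congr_fun h y

lemma transpose_g₃_d₃ (y : A₂ → R) :
    transpose K.g₃ (transpose d₃ y) = transpose b₃ (transpose K.g₂ y) := by
  have h := congrArg transpose K.p₃_g₃
  rw [transpose_comp, transpose_comp] at h
  exact LinearMap.congr_fun h y

lemma sub_transpose_f₂_g₂ (w : A₂ → R) : w - transpose K.f₂ (transpose K.g₂ w) =
    transpose K.h₂ (transpose d₃ w) + transpose d₂ (transpose K.h₁ w) := by
  have h := congrArg transpose K.id_sub_g₂_f₂
  simp only [transpose_sub, transpose_add, transpose_comp, transpose_id] at h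
  exact LinearMap.congr_fun h w

lemma sub_transpose_f₃_g₃ (w : A₃ → R) : w - transpose K.f₃ (transpose K.g₃ w) =
    transpose K.h₃ (transpose d₄ w) + transpose d₃ (transpose K.h₂ w) := by
  have h := congrArg transpose K.id_sub_g₃_f₃
  simp only [transpose_sub, transpose_add, transpose_comp, transpose_id] at h
  exact LinearMap.congr_fun h w

lemma sub_transpose_g₃_f₃ (z : T → R) :
    z - transpose K.g₃ (transpose K.f₃ z) = transpose b₃ (transpose K.k z) := by
  have h := congrArg transpose K.id_sub_f₃_g₃
  simp only [transpose_sub, transpose_comp, transpose_id] at h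
  exact LinearMap.congr_fun h z

lemma transpose_d₄_f₃ (hd : d₃ ∘ₗ d₄ = 0) (hb : Function.Injective b₃) (z : T → R) :
    transpose d₄ (transpose K.f₃ z) = 0 := by
  have h : K.f₃ ∘ₗ d₄ = 0 := by
    rw [← LinearMap.cancel_left hb, ← LinearMap.comp_assoc, K.q₃_f₃, LinearMap.comp_assoc, hd,
      LinearMap.comp_zero, LinearMap.comp_zero]
  rw [← LinearMap.comp_apply, ← transpose_comp, h, transpose_zero, LinearMap.zero_apply]

variable {H : Type*} [AddCommGroup H] [Module Rᵐᵒᵖ H]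

lemma exists_surjective_of_degree_two (K : ComplexComparison d₂ d₃ d₄ b₂ b₃)
    {c : LinearMap.ker (transpose d₃) →ₗ[Rᵐᵒᵖ] H}
    (hc : Function.Surjective c) (hc₀ : ∀ z, z.1 ∈ LinearMap.range (transpose d₂) → c z = 0) :
    ∃ q : LinearMap.ker (transpose b₃) →ₗ[Rᵐᵒᵖ] H,
      Function.Surjective q ∧ ∀ z, z.1 ∈ LinearMap.range (transpose b₂) → q z = 0 := by
  let Ψ : LinearMap.ker (transpose b₃) →ₗ[Rᵐᵒᵖ] LinearMap.ker (transpose d₃) :=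
    (transpose K.f₂).restrict fun z hz => by
      rw [LinearMap.mem_ker, ← K.transpose_f₃_b₃, LinearMap.mem_ker.1 hz, map_zero]
  refine ⟨c ∘ₗ Ψ, fun x => ?_, ?_⟩
  · obtain ⟨⟨w, hw⟩, rfl⟩ := hc x
    refine ⟨⟨transpose K.g₂ w, by
      rw [LinearMap.mem_ker, ← K.transpose_g₃_d₃, LinearMap.mem_ker.1 hw, map_zero]⟩, ?_⟩
    have hsub := K.sub_transpose_f₂_g₂ w
    rw [LinearMap.mem_ker.1 hw, map_zero, zero_add] at hsub
    refine (sub_eq_zero.1 ?_).symm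
    rw [LinearMap.comp_apply, ← map_sub]
    exact hc₀ _ ⟨_, hsub.symm⟩
  · rintro ⟨_, hz⟩ ⟨y, rfl⟩
    exact hc₀ _ ⟨_, (K.transpose_f₂_b₂ y).symm⟩

lemma exists_surjective_of_degree_three (K : ComplexComparison d₂ d₃ d₄ b₂ b₃)
    {c : LinearMap.ker (transpose d₄) →ₗ[Rᵐᵒᵖ] H}
    (hc : Function.Surjective c) (hc₀ : ∀ z, c z = 0 ↔ z.1 ∈ LinearMap.range (transpose d₃))
    (hd : d₃ ∘ₗ d₄ = 0) (hb : Function.Injective b₃) :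
    ∃ q : (T → R) →ₗ[Rᵐᵒᵖ] H,
      Function.Surjective q ∧ LinearMap.ker q = LinearMap.range (transpose b₃) := by
  let Ψ : (T → R) →ₗ[Rᵐᵒᵖ] LinearMap.ker (transpose d₄) :=
    (transpose K.f₃).codRestrict _ (K.transpose_d₄_f₃ hd hb)
  refine ⟨c ∘ₗ Ψ, fun x => ?_, Submodule.ext fun z => ⟨fun hz => ?_, ?_⟩⟩
  · obtain ⟨⟨w, hw⟩, rfl⟩ := hc x
    have hsub := K.sub_transpose_f₃_g₃ w
    rw [LinearMap.mem_ker.1 hw, map_zero, zero_add] at hsub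
    refine ⟨transpose K.g₃ w, (sub_eq_zero.1 ?_).symm⟩
    rw [LinearMap.comp_apply, ← map_sub]
    exact (hc₀ _).2 ⟨_, hsub.symm⟩
  · obtain ⟨y, hy : _ = transpose K.f₃ z⟩ := (hc₀ _).1 hz
    refine ⟨transpose K.k z + transpose K.g₂ y, ?_⟩
    rw [map_add, ← K.sub_transpose_g₃_f₃, ← K.transpose_g₃_d₃, hy, sub_add_cancel]
  · rintro ⟨y, rfl⟩
    exact (hc₀ _).2 ⟨_, (K.transpose_f₃_b₃ y).symm⟩

end ComplexComparison

end Dual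

end Comparison

section CocycleClass

variable {π} {n : ℕ}

lemma cocyclesΛ_eq_ker (π : Type) [Group π] (n : ℕ) :
    cocyclesΛ π n = LinearMap.ker (transpose (barD π n)) := by
  rw [transpose_barD, cocyclesΛ]

/-- The projection from cocycles to cohomology, with cocycles encoded as the kernel of the dual of
the differential of the bar resolution. -/
noncomputable def cocycleClass (π : Type) [Group π] (n : ℕ) :
    LinearMap.ker (transpose (barD π n)) →ₗ[(GroupRing π)ᵐᵒᵖ] groupCohΛ π n :=
  Submodule.mkQ _ ∘ₗ (LinearEquiv.ofEq _ _ (cocyclesΛ_eq_ker π n).symm).toLinearMap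

lemma cocycleClass_surjective : Function.Surjective (cocycleClass π n) :=
  (Submodule.mkQ_surjective _).comp (LinearEquiv.surjective _)

lemma cocycleClass_eq_zero_iff {z : LinearMap.ker (transpose (barD π (n + 1)))} :
    cocycleClass π (n + 1) z = 0 ↔ z.1 ∈ LinearMap.range (transpose (barD π n)) := by
  simp only [transpose_barD π n]
  exact Submodule.Quotient.mk_eq_zero _

variable {V E T : Type*} {b₂ : (E →₀ GroupRing π) →ₗ[GroupRing π] (V →₀ GroupRing π)}
  {b₃ : (T →₀ GroupRing π) →ₗ[GroupRing π] (E →₀ GroupRing π)}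

lemma ComplexComparison.exists_surjective_groupCohΛ_two
    (K : ComplexComparison (barD π 1) (barD π 2) (barD π 3) b₂ b₃) :
    ∃ q : LinearMap.ker (transpose b₃) →ₗ[(GroupRing π)ᵐᵒᵖ] groupCohΛ π 2,
      Function.Surjective q ∧ ∀ z, z.1 ∈ LinearMap.range (transpose b₂) → q z = 0 :=
  K.exists_surjective_of_degree_two cocycleClass_surjective fun _ => cocycleClass_eq_zero_iff.2

lemma ComplexComparison.exists_surjective_groupCohΛ_three
    (K : ComplexComparison (barD π 1) (barD π 2) (barD π 3) b₂ b₃) (hb₃ : Function.Injective b₃) :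
    ∃ q : (T → GroupRing π) →ₗ[(GroupRing π)ᵐᵒᵖ] groupCohΛ π 3,
      Function.Surjective q ∧ LinearMap.ker q = LinearMap.range (transpose b₃) :=
  K.exists_surjective_of_degree_three cocycleClass_surjective
    (fun _ => cocycleClass_eq_zero_iff) (barD_exact π 2).linearMap_comp_eq_zero hb₃

end CocycleClass
section SquareComplex

variable {R V : Type*} [Ring R]

/-- Labels `x v` of the vertices of a graph such that the labels of adjacent vertices behave like a
regular sequence on either side, and for vertices `a` and `b` adjacent to `c` the label of `c` is
moreover regular modulo the right ideal generated by the labels of `a` and `b`. -/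
structure IsRegularLabelling (Γ : SimpleGraph V) (x : V → R) : Prop where
  commute {a b : V} : Γ.Adj a b → Commute (x a) (x b)
  eq_zero_of_mul_eq_zero {a b : V} (hab : Γ.Adj a b) {r : R} : r * x a = 0 → r = 0
  exists_of_mul_eq {a b : V} (hab : Γ.Adj a b) {r s : R} :
    r * x b = s * x a → ∃ t, r = t * x a ∧ s = t * x b
  exists_of_mul_eq_left {a b : V} (hab : Γ.Adj a b) {r s : R} :
    x b * r = x a * s → ∃ t, r = x a * t ∧ s = x b * t
  mem_span_of_mul_mem {a b c : V} (hac : Γ.Adj a c) (hbc : Γ.Adj b c) {r : R} :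
    x c * r ∈ Submodule.span Rᵐᵒᵖ {x a, x b} → r ∈ Submodule.span Rᵐᵒᵖ {x a, x b}

/-- The boundary of the square spanned by two commuting edge loops at the vertices `a` and `b` of a
graph, when `x v` is the boundary of the edge loop at `v`. -/
noncomputable def squareBoundary (x : V → R) (a b : V) : V →₀ R :=
  Finsupp.single b (x a) - Finsupp.single a (x b)

/-- The cells of the universal cover of a Salvetti complex in dimensions two and three, up to
translation: one oriented edge of the defining graph for each square, and one triangle for each
cube, with the boundary of that cube. -/
structure SquareComplex (R V : Type*) [Ring R] where
  Edge : Type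
  Triangle : Type
  [finite_edge : Finite Edge]
  [finite_triangle : Finite Triangle]
  src : Edge → V
  tgt : Edge → V
  boundary : Triangle → Edge →₀ R

attribute [instance] SquareComplex.finite_edge SquareComplex.finite_triangle

namespace SquareComplex

variable (C : SquareComplex R V) (x : V → R)

/-- The differential in degree two of the cellular chain complex. -/
noncomputable def d₂ : (C.Edge →₀ R) →ₗ[R] (V →₀ R) :=
  Finsupp.linearCombination R fun i => squareBoundary x (C.src i) (C.tgt i)

/-- The differential in degree three of the cellular chain complex. -/
noncomputable def d₃ : (C.Triangle →₀ R) →ₗ[R] (C.Edge →₀ R) :=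
  Finsupp.linearCombination R C.boundary

/-- The right module of cellular two-cocycles whose value at each edge in `T` lies in the right
ideal generated by the labels of the two ends. -/
noncomputable def constrainedCocycles (T : Set C.Edge) : Submodule Rᵐᵒᵖ (C.Edge → R) :=
  LinearMap.ker (transpose C.d₃) ⊓
    Submodule.pi T fun i => Submodule.span Rᵐᵒᵖ {x (C.src i), x (C.tgt i)}

/-- Each functional on the constrained two-cocycles which kills the coboundaries is zero. -/
def IsDualTrivial (T : Set C.Edge) : Prop :=
  ∀ F : C.constrainedCocycles x T →ₗ[Rᵐᵒᵖ] R,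
    (∀ z, z.1 ∈ LinearMap.range (transpose (C.d₂ x)) → F z = 0) → F = 0

variable {C x} {Γ : SimpleGraph V}

lemma mem_constrainedCocycles {T : Set C.Edge} {z : C.Edge → R} :
    z ∈ C.constrainedCocycles x T ↔ transpose C.d₃ z = 0 ∧
      ∀ i ∈ T, z i ∈ Submodule.span Rᵐᵒᵖ {x (C.src i), x (C.tgt i)} :=
  Iff.rfl

lemma d₂_single (i : C.Edge) (r : R) :
    C.d₂ x (Finsupp.single i r) = r • squareBoundary x (C.src i) (C.tgt i) :=
  Finsupp.linearCombination_single _ _ _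

lemma transpose_d₂_apply (y : V → R) (i : C.Edge) :
    transpose (C.d₂ x) y i = x (C.src i) * y (C.tgt i) - x (C.tgt i) * y (C.src i) := by
  simp [transpose_apply, d₂, squareBoundary]

lemma transpose_d₂_mem_constrainedCocycles (h : C.d₂ x ∘ₗ C.d₃ = 0) (T : Set C.Edge)
    (y : V → R) : transpose (C.d₂ x) y ∈ C.constrainedCocycles x T := by
  refine mem_constrainedCocycles.2 ⟨?_, fun i _ => mem_span_pair_mulOpposite.2
    ⟨y (C.tgt i), -y (C.src i), by rw [transpose_d₂_apply, mul_neg, sub_eq_add_neg]⟩⟩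
  rw [← LinearMap.comp_apply, ← transpose_comp, h, transpose_zero, LinearMap.zero_apply]

lemma d₂_apply_eq_zero {v : V} (hsrc : ∀ i, C.src i ≠ v) (htgt : ∀ i, C.tgt i ≠ v)
    (y : C.Edge →₀ R) : C.d₂ x y v = 0 := by
  simp [d₂, Finsupp.linearCombination_apply, Finsupp.sum, squareBoundary, hsrc, htgt]

lemma IsDualTrivial.of_restrict {C' : SquareComplex R V} {T : Set C.Edge} {T' : Set C'.Edge}
    (hT : C.IsDualTrivial x T) (e : C.Edge → C'.Edge) (hsrc : ∀ i, C'.src (e i) = C.src i)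
    (htgt : ∀ i, C'.tgt (e i) = C.tgt i) (hd : C'.d₂ x ∘ₗ C'.d₃ = 0)
    (hrestrict : ∀ z ∈ C'.constrainedCocycles x T', z ∘ e ∈ C.constrainedCocycles x T)
    (hextend : ∀ z ∈ C.constrainedCocycles x T, ∃ z' ∈ C'.constrainedCocycles x T', z' ∘ e = z)
    (hker : ∀ F : C'.constrainedCocycles x T' →ₗ[Rᵐᵒᵖ] R,
      (∀ z, z.1 ∈ LinearMap.range (transpose (C'.d₂ x)) → F z = 0) →
        ∀ z, z.1 ∘ e = 0 → F z = 0) :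
    C'.IsDualTrivial x T' := by
  intro F hF
  let ρ : C'.constrainedCocycles x T' →ₗ[Rᵐᵒᵖ] C.constrainedCocycles x T :=
    (LinearMap.funLeft Rᵐᵒᵖ R e).restrict hrestrict
  have hρ : Function.Surjective ρ := fun z => by
    obtain ⟨z', hz', h⟩ := hextend z z.2
    exact ⟨⟨z', hz'⟩, Subtype.ext h⟩
  obtain ⟨F₀, rfl⟩ := exists_comp_eq_of_ker_le hρ (g := F)
    fun z hz => hker F hF z (congrArg Subtype.val (LinearMap.mem_ker.1 hz))
  rw [hT F₀ ?_, LinearMap.zero_comp]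
  rintro ⟨_, hz⟩ ⟨y, rfl⟩
  have hρy : ρ ⟨_, transpose_d₂_mem_constrainedCocycles hd T' y⟩ = ⟨_, hz⟩ :=
    Subtype.ext <| funext fun i => by
      change transpose (C'.d₂ x) y (e i) = transpose (C.d₂ x) y i
      rw [transpose_d₂_apply, transpose_d₂_apply, hsrc, htgt]
  rw [← hρy]
  exact hF _ ⟨y, rfl⟩

/-- The square complex after attaching an edge from the vertex `a` to a new vertex `b`. -/
noncomputable abbrev attachEdge (C : SquareComplex R V) (a b : V) : SquareComplex R V where
  Edge := Option C.Edge
  Triangle := C.Triangle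
  src i := i.elim a C.src
  tgt i := i.elim b C.tgt
  boundary t := Finsupp.lmapDomain R R some (C.boundary t)

/-- The square complex after attaching a triangle with new vertex `c` along the edge `i`. The two
new edges run to `c` from the source and from the target of `i`, in this order. -/
noncomputable abbrev attachTriangle (C : SquareComplex R V) (x : V → R) (i : C.Edge) (c : V) :
    SquareComplex R V where
  Edge := Option (Option C.Edge)
  Triangle := Option C.Triangle
  src j := j.elim (C.src i) fun j => j.elim (C.tgt i) C.src
  tgt j := j.elim c fun j => j.elim c C.tgt
  boundary t := t.elim
    (((Finsupp.single i (x c)).optionElim (x (C.src i))).optionElim (-x (C.tgt i)))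
    fun t => (Finsupp.lmapDomain R R some ∘ₗ Finsupp.lmapDomain R R some) (C.boundary t)

lemma attachEdge_d₂_apply (a b : V) (y : Option C.Edge →₀ R) :
    (C.attachEdge a b).d₂ x y = y none • squareBoundary x a b + C.d₂ x y.some :=
  Finsupp.linearCombination_option _ _ y

lemma attachEdge_d₃_apply (a b : V) (w : C.Triangle →₀ R) :
    (C.attachEdge a b).d₃ w = (C.d₃ w).mapDomain some :=
  (Finsupp.apply_linearCombination R (Finsupp.lmapDomain R R some) C.boundary w).symm

lemma attachTriangle_d₂_apply (i : C.Edge) (c : V) (y : Option (Option C.Edge) →₀ R) :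
    (C.attachTriangle x i c).d₂ x y = y none • squareBoundary x (C.src i) c +
      (y (some none) • squareBoundary x (C.tgt i) c + C.d₂ x y.some.some) := by
  refine (Finsupp.linearCombination_option _ _ y).trans ?_
  rw [Finsupp.linearCombination_option]
  rfl

lemma attachTriangle_d₃_apply (i : C.Edge) (c : V) (w : Option C.Triangle →₀ R) :
    (C.attachTriangle x i c).d₃ w =
      w none • ((Finsupp.single i (x c)).optionElim (x (C.src i))).optionElim (-x (C.tgt i)) +
        ((C.d₃ w.some).mapDomain some).mapDomain some :=
  (Finsupp.linearCombination_option _ _ w).trans <| congrArg _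
    (Finsupp.apply_linearCombination R (Finsupp.lmapDomain R R some ∘ₗ Finsupp.lmapDomain R R some)
      C.boundary w.some).symm

lemma mapDomain_some_apply_none {E : Type*} (y : E →₀ R) : y.mapDomain some none = 0 :=
  Finsupp.mapDomain_of_notMem_range y none (by simp)

lemma mapDomain_some_apply_some {E : Type*} (y : E →₀ R) (i : E) :
    y.mapDomain some (some i) = y i :=
  Finsupp.mapDomain_apply (Option.some_injective E) y i

lemma some_mapDomain_some {E : Type*} (y : E →₀ R) : (y.mapDomain some).some = y :=
  Finsupp.ext (mapDomain_some_apply_some y)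

lemma mapDomain_some_some {E : Type*} {y : Option E →₀ R} (hy : y none = 0) :
    y.some.mapDomain some = y := by
  ext i
  cases i with
  | none => rw [mapDomain_some_apply_none, hy]
  | some i => exact mapDomain_some_apply_some y.some i

lemma attachEdge_exact {a b : V} (hx : IsRegularLabelling Γ x) (hab : Γ.Adj a b)
    (hsrc : ∀ i, C.src i ≠ b) (htgt : ∀ i, C.tgt i ≠ b) (hC : Function.Exact C.d₃ (C.d₂ x)) :
    Function.Exact (C.attachEdge a b).d₃ ((C.attachEdge a b).d₂ x) := by
  refine fun y : Option C.Edge →₀ R => ⟨fun hy => ?_, ?_⟩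
  · rw [attachEdge_d₂_apply] at hy
    have hnone : y none = 0 := hx.eq_zero_of_mul_eq_zero hab <| by
      simpa [d₂_apply_eq_zero hsrc htgt, squareBoundary, hab.ne] using DFunLike.congr_fun hy b
    rw [hnone, zero_smul, zero_add] at hy
    obtain ⟨w, hw⟩ := (hC _).1 hy
    exact ⟨w, by rw [attachEdge_d₃_apply, hw, mapDomain_some_some hnone]⟩
  · rintro ⟨w, rfl⟩
    rw [attachEdge_d₂_apply, attachEdge_d₃_apply, mapDomain_some_apply_none, zero_smul, zero_add,
      some_mapDomain_some, hC.apply_apply_eq_zero]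

lemma attachEdge_transpose_d₃ (a b : V) (z : Option C.Edge → R) :
    transpose (C.attachEdge a b).d₃ z = transpose C.d₃ (z ∘ some) := by
  refine funext fun t : C.Triangle => ?_
  rw [transpose_apply, transpose_apply, attachEdge_d₃_apply, Finsupp.linearCombination_mapDomain]

lemma elim_mem_constrainedCocycles_attachEdge {a b : V} {T : Set (Option C.Edge)} {r : R}
    {z : C.Edge → R} (hz : z ∈ C.constrainedCocycles x (some ⁻¹' T))
    (hr : none ∈ T → r ∈ Submodule.span Rᵐᵒᵖ {x a, x b}) :
    (fun i => i.elim r z) ∈ (C.attachEdge a b).constrainedCocycles x T := by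
  refine mem_constrainedCocycles.2 ⟨(attachEdge_transpose_d₃ a b _).trans hz.1, ?_⟩
  rintro (_ | i) hi
  exacts [hr hi, hz.2 i hi]

/-- Multiplying by `x a` turns the cochain supported at the new edge into the coboundary of a
cochain supported at the new vertex. -/
lemma attachEdge_apply_eq_zero {a b : V} (hx : IsRegularLabelling Γ x) (hab : Γ.Adj a b)
    (hsrc : ∀ i, C.src i ≠ b) (htgt : ∀ i, C.tgt i ≠ b) {T : Set (Option C.Edge)}
    {F : (C.attachEdge a b).constrainedCocycles x T →ₗ[Rᵐᵒᵖ] R}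
    (hF : ∀ z, z.1 ∈ LinearMap.range (transpose ((C.attachEdge a b).d₂ x)) → F z = 0)
    {z : (C.attachEdge a b).constrainedCocycles x T} (hsome : z.1 ∘ some = 0)
    (hnone : Commute (z.1 none) (x a)) : F z = 0 := by
  classical
  refine hx.eq_zero_of_mul_eq_zero hab ?_
  rw [← op_smul_eq_mul, ← map_smul]
  refine hF _ ⟨Pi.single b (z.1 none), funext fun i => ?_⟩
  rw [transpose_d₂_apply]
  cases i with
  | none => simp [hab.ne, hnone.eq]
  | some i => simpa [hsrc, htgt] using (congrArg (· * x a) (congrFun hsome i)).symm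

lemma attachEdge_isDualTrivial {a b : V} (hx : IsRegularLabelling Γ x) (hab : Γ.Adj a b)
    (hsrc : ∀ i, C.src i ≠ b) (htgt : ∀ i, C.tgt i ≠ b) (hC : Function.Exact C.d₃ (C.d₂ x))
    {T : Set (Option C.Edge)} (hT : C.IsDualTrivial x (some ⁻¹' T)) :
    (C.attachEdge a b).IsDualTrivial x T := by
  refine hT.of_restrict some (fun _ => rfl) (fun _ => rfl)
    (attachEdge_exact hx hab hsrc htgt hC).linearMap_comp_eq_zero ?_ ?_ fun F hF z hz => ?_
  · exact fun z hz =>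
      ⟨(attachEdge_transpose_d₃ a b z).symm.trans hz.1, fun i hi => hz.2 (some i) hi⟩
  · exact fun z hz =>
      ⟨_, elim_mem_constrainedCocycles_attachEdge hz fun _ => zero_mem _, rfl⟩
  have hmem : ∀ {r}, (none ∈ T → r ∈ Submodule.span Rᵐᵒᵖ {x a, x b}) →
      (fun i => i.elim r 0) ∈ (C.attachEdge a b).constrainedCocycles x T :=
    elim_mem_constrainedCocycles_attachEdge (zero_mem _)
  by_cases hnone : none ∈ T
  · have hxa := hmem fun _ => Submodule.subset_span (Set.mem_insert (x a) {x b})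
    have hxb := hmem fun _ => Submodule.subset_span (Set.mem_insert_of_mem (x a) rfl)
    obtain ⟨r, s, hrs⟩ := mem_span_pair_mulOpposite.1 (z.2.2 none hnone)
    have hz' : z = MulOpposite.op r • ⟨_, hxa⟩ + MulOpposite.op s • ⟨_, hxb⟩ :=
      Subtype.ext <| funext fun i => by
        cases i with
        | none => exact hrs.symm
        | some i => simpa using congrFun hz i
    rw [hz', map_add, map_smul, map_smul,
      attachEdge_apply_eq_zero hx hab hsrc htgt hF rfl (Commute.refl _),
      attachEdge_apply_eq_zero hx hab hsrc htgt hF rfl (hx.commute hab).symm, smul_zero,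
      smul_zero, add_zero]
  · have hone := hmem (r := 1) fun h => absurd h hnone
    have hz' : z = MulOpposite.op (z.1 none) • ⟨_, hone⟩ := Subtype.ext <| funext fun i => by
      cases i with
      | none => simp
      | some i => simpa using congrFun hz i
    rw [hz', map_smul, attachEdge_apply_eq_zero hx hab hsrc htgt hF rfl (Commute.one_left _),
      smul_zero]

lemma squareBoundary_add_squareBoundary_add_squareBoundary {a b c : V} (hab : Commute (x a) (x b))
    (hac : Commute (x a) (x c)) (hbc : Commute (x b) (x c)) :
    -x b • squareBoundary x a c + (x a • squareBoundary x b c + x c • squareBoundary x a b) =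
      0 := by
  simp only [squareBoundary, smul_sub, Finsupp.smul_single, smul_eq_mul, neg_smul, hab.eq, hac.eq,
    hbc.eq]
  abel

lemma attachTriangle_d₂_comp_d₃ {i : C.Edge} {c : V}
    (hab : Commute (x (C.src i)) (x (C.tgt i))) (hac : Commute (x (C.src i)) (x c))
    (hbc : Commute (x (C.tgt i)) (x c)) (hC : C.d₂ x ∘ₗ C.d₃ = 0) :
    (C.attachTriangle x i c).d₂ x ∘ₗ (C.attachTriangle x i c).d₃ = 0 := by
  refine LinearMap.ext fun w : Option C.Triangle →₀ R => ?_
  rw [LinearMap.comp_apply, attachTriangle_d₃_apply, map_add, map_smul, attachTriangle_d₂_apply,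
    attachTriangle_d₂_apply]
  simp only [Finsupp.optionElim_apply_none, Finsupp.optionElim_apply_some, Finsupp.some_optionElim,
    some_mapDomain_some, mapDomain_some_apply_none, mapDomain_some_apply_some]
  rw [← LinearMap.comp_apply (C.d₂ x), hC, d₂_single,
    squareBoundary_add_squareBoundary_add_squareBoundary hab hac hbc]
  simp

lemma attachTriangle_exact {i : C.Edge} {c : V} (hx : IsRegularLabelling Γ x)
    (hab : Γ.Adj (C.src i) (C.tgt i)) (hac : Γ.Adj (C.src i) c) (hbc : Γ.Adj (C.tgt i) c)
    (hsrc : ∀ i, C.src i ≠ c) (htgt : ∀ i, C.tgt i ≠ c) (hC : Function.Exact C.d₃ (C.d₂ x)) :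
    Function.Exact (C.attachTriangle x i c).d₃ ((C.attachTriangle x i c).d₂ x) := by
  refine LinearMap.exact_of_comp_of_mem_range (attachTriangle_d₂_comp_d₃ (hx.commute hab)
    (hx.commute hac) (hx.commute hbc) hC.linearMap_comp_eq_zero)
    fun y : Option (Option C.Edge) →₀ R => fun hy => ?_
  rw [attachTriangle_d₂_apply] at hy
  obtain ⟨t, hbc', hac'⟩ :
      ∃ t, y (some none) = t * x (C.src i) ∧ -y none = t * x (C.tgt i) := by
    refine hx.exists_of_mul_eq hab ?_
    rw [neg_mul, eq_neg_iff_add_eq_zero, add_comm]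
    simpa [d₂_apply_eq_zero hsrc htgt, squareBoundary, hsrc, htgt] using DFunLike.congr_fun hy c
  rw [neg_eq_iff_eq_neg] at hac'
  obtain ⟨w, hw⟩ := (hC (y.some.some - t • Finsupp.single i (x c))).1 <| by
    have ht := congrArg (t • ·) (squareBoundary_add_squareBoundary_add_squareBoundary
      (hx.commute hab) (hx.commute hac) (hx.commute hbc))
    simp only [smul_add, smul_smul, smul_zero, mul_neg] at ht
    rw [hac', hbc'] at hy
    rw [map_sub, map_smul, d₂_single, smul_smul,
      add_left_cancel (add_left_cancel (hy.trans ht.symm)), sub_self]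
  refine ⟨w.optionElim t, Finsupp.ext fun j => ?_⟩
  rw [attachTriangle_d₃_apply, Finsupp.some_optionElim, hw]
  obtain _ | _ | j := j
  · simp [mapDomain_some_apply_none, hac']
  · simp [mapDomain_some_apply_none, mapDomain_some_apply_some, hbc']
  · simp only [Finsupp.add_apply, Finsupp.smul_apply, Finsupp.optionElim_apply_none,
      Finsupp.optionElim_apply_some, mapDomain_some_apply_some, Finsupp.sub_apply,
      Finsupp.some_apply, add_sub_cancel]

lemma attachTriangle_injective {i : C.Edge} {c : V} (ha : ∀ r, r * x (C.src i) = 0 → r = 0)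
    (hC : Function.Injective C.d₃) : Function.Injective (C.attachTriangle x i c).d₃ := by
  refine (injective_iff_map_eq_zero _).2 fun w : Option C.Triangle →₀ R => fun hw => ?_
  rw [attachTriangle_d₃_apply] at hw
  have hnone : w none = 0 := ha _ <| by
    simpa [mapDomain_some_apply_none, mapDomain_some_apply_some] using
      DFunLike.congr_fun hw (some none)
  have hsome : w.some = 0 := (map_eq_zero_iff _ hC).1 <| Finsupp.ext fun j => by
    simpa [hnone, mapDomain_some_apply_some] using DFunLike.congr_fun hw (some (some j))
  rw [← w.optionElim_some, hnone, hsome]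
  ext j
  cases j <;> simp

lemma attachTriangle_transpose_d₃_eq_zero_iff {i : C.Edge} {c : V}
    {z : Option (Option C.Edge) → R} : transpose (C.attachTriangle x i c).d₃ z = 0 ↔
      transpose C.d₃ (z ∘ some ∘ some) = 0 ∧ x (C.tgt i) * z none =
        x (C.src i) * z (some none) + x c * z (some (some i)) := by
  have hnone : transpose (C.attachTriangle x i c).d₃ z none = -(x (C.tgt i) * z none) +
      (x (C.src i) * z (some none) + x c * z (some (some i))) := by
    rw [transpose_apply, attachTriangle_d₃_apply]
    simp [Finsupp.linearCombination_option]
  have hsome : ∀ t, transpose (C.attachTriangle x i c).d₃ z (some t) =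
      transpose C.d₃ (z ∘ some ∘ some) t := fun t => by
    rw [transpose_apply, transpose_apply, attachTriangle_d₃_apply]
    simp [Finsupp.linearCombination_mapDomain, Function.comp_assoc]
  rw [funext_iff, funext_iff, ← neg_add_eq_zero, ← hnone]
  exact ⟨fun h => ⟨fun t => (hsome t).symm.trans (h (some t)), h none⟩,
    fun h t => t.rec h.2 fun t => (hsome t).trans (h.1 t)⟩

lemma comp_some_mem_constrainedCocycles {i : C.Edge} {c : V} (hx : IsRegularLabelling Γ x)
    (hac : Γ.Adj (C.src i) c) (hbc : Γ.Adj (C.tgt i) c) {T : Set (Option (Option C.Edge))}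
    {z : Option (Option C.Edge) → R}
    (hz : z ∈ (C.attachTriangle x i c).constrainedCocycles x T) :
    z ∘ some ∘ some ∈ C.constrainedCocycles x (insert i ((some ∘ some) ⁻¹' T)) := by
  obtain ⟨hcocycle, hi⟩ := attachTriangle_transpose_d₃_eq_zero_iff.1 hz.1
  refine mem_constrainedCocycles.2 ⟨hcocycle, ?_⟩
  rintro j (rfl | hj)
  · refine hx.mem_span_of_mul_mem hac hbc <| mem_span_pair_mulOpposite.2
      ⟨-z (some none), z none, ?_⟩
    rw [hi, mul_neg, neg_add_cancel_left, Function.comp_apply, Function.comp_apply]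
  · exact hz.2 (some (some j)) hj

lemma exists_mem_constrainedCocycles_comp_some_eq {i : C.Edge} {c : V}
    (hac : Commute (x (C.src i)) (x c)) (hbc : Commute (x (C.tgt i)) (x c))
    {T : Set (Option (Option C.Edge))} {z : C.Edge → R}
    (hz : z ∈ C.constrainedCocycles x (insert i ((some ∘ some) ⁻¹' T))) :
    ∃ z' ∈ (C.attachTriangle x i c).constrainedCocycles x T, z' ∘ some ∘ some = z := by
  obtain ⟨r, s, hrs⟩ := mem_span_pair_mulOpposite.1 (hz.2 i (Set.mem_insert _ _))
  refine ⟨fun j => j.elim (x c * s) fun j => j.elim (x c * -r) z, mem_constrainedCocycles.2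
    ⟨attachTriangle_transpose_d₃_eq_zero_iff.2 ⟨hz.1, ?_⟩, ?_⟩, rfl⟩
  · simp only [Option.elim_none, Option.elim_some]
    rw [← hrs, mul_add, ← mul_assoc, ← mul_assoc, ← mul_assoc, ← mul_assoc, hac.eq, hbc.eq, mul_neg,
      neg_add_cancel_left]
  · rintro (_ | _ | j) hj
    · exact mem_span_pair_mulOpposite.2 ⟨0, s, by simp⟩
    · exact mem_span_pair_mulOpposite.2 ⟨0, -r, by simp⟩
    · exact hz.2 j (Set.mem_insert_of_mem _ hj)

lemma attachTriangle_mem_range_of_comp_some_eq_zero {i : C.Edge} {c : V}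
    (hx : IsRegularLabelling Γ x) (hab : Γ.Adj (C.src i) (C.tgt i)) (hsrc : ∀ j, C.src j ≠ c)
    (htgt : ∀ j, C.tgt j ≠ c) {z : Option (Option C.Edge) → R}
    (hz : transpose (C.attachTriangle x i c).d₃ z = 0) (hsome : z ∘ some ∘ some = 0) :
    z ∈ LinearMap.range (transpose ((C.attachTriangle x i c).d₂ x)) := by
  classical
  have hzi := (attachTriangle_transpose_d₃_eq_zero_iff.1 hz).2
  have hi : z (some (some i)) = 0 := congrFun hsome i
  rw [hi, mul_zero, add_zero] at hzi
  obtain ⟨t, hat, hbt⟩ := hx.exists_of_mul_eq_left hab hzi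
  refine ⟨Pi.single c t, funext fun j => ?_⟩
  rw [transpose_d₂_apply]
  obtain _ | _ | j := j
  · simp [hsrc, hat]
  · simp [htgt, hbt]
  · simpa [hsrc, htgt] using (congrFun hsome j).symm

lemma attachTriangle_isDualTrivial {i : C.Edge} {c : V} (hx : IsRegularLabelling Γ x)
    (hab : Γ.Adj (C.src i) (C.tgt i)) (hac : Γ.Adj (C.src i) c) (hbc : Γ.Adj (C.tgt i) c)
    (hsrc : ∀ j, C.src j ≠ c) (htgt : ∀ j, C.tgt j ≠ c) (hC : C.d₂ x ∘ₗ C.d₃ = 0)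
    {T : Set (Option (Option C.Edge))}
    (hT : C.IsDualTrivial x (insert i ((some ∘ some) ⁻¹' T))) :
    (C.attachTriangle x i c).IsDualTrivial x T :=
  hT.of_restrict (some ∘ some) (fun _ => rfl) (fun _ => rfl)
    (attachTriangle_d₂_comp_d₃ (hx.commute hab) (hx.commute hac) (hx.commute hbc) hC)
    (fun _ => comp_some_mem_constrainedCocycles hx hac hbc)
    (fun _ => exists_mem_constrainedCocycles_comp_some_eq (hx.commute hac) (hx.commute hbc))
    fun _ hF z hz =>
      hF z (attachTriangle_mem_range_of_comp_some_eq_zero hx hab hsrc htgt z.2.1 hz)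

lemma attachEdge_injective (a b : V) (hC : Function.Injective C.d₃) :
    Function.Injective (C.attachEdge a b).d₃ := by
  have h : ⇑(C.attachEdge a b).d₃ = Finsupp.mapDomain some ∘ C.d₃ :=
    funext fun w => attachEdge_d₃_apply (C := C) a b w
  rw [h]
  exact (Finsupp.mapDomain_injective (Option.some_injective _)).comp hC

/-- The square complex for the graph `Γ` is complete in dimension two, computes a free resolution,
and all of its modules of constrained cocycles have trivial dual modulo the coboundaries. -/
structure IsTame (C : SquareComplex R V) (Γ : SimpleGraph V) (x : V → R) : Prop where
  adj (i : C.Edge) : Γ.Adj (C.src i) (C.tgt i)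
  exists_edge {u v : V} : Γ.Adj u v → ∃ i, s(C.src i, C.tgt i) = s(u, v)
  injective : Function.Injective C.d₃
  exact : Function.Exact C.d₃ (C.d₂ x)
  isDualTrivial (T : Set C.Edge) : C.IsDualTrivial x T

/-- The square complex of a graph without edges. -/
abbrev empty (R V : Type*) [Ring R] : SquareComplex R V where
  Edge := Empty
  Triangle := Empty
  src := Empty.elim
  tgt := Empty.elim
  boundary := Empty.elim

lemma isTame_empty (x : V → R) : (empty R V).IsTame ⊥ x where
  adj i := i.elim
  exists_edge h := h.elim
  injective := Function.injective_of_subsingleton _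
  exact y := iff_of_true (by rw [Subsingleton.elim y 0, map_zero]) ⟨0, Subsingleton.elim _ _⟩
  isDualTrivial _ _ _ := LinearMap.ext fun z => by
    rw [Subsingleton.elim z 0, map_zero, map_zero]

lemma IsTame.attachEdge (hC : C.IsTame Γ x) {a b : V} (hab : a ≠ b) (hb : ∀ v, ¬Γ.Adj v b)
    (hx : IsRegularLabelling (Γ ⊔ SimpleGraph.fromEdgeSet {s(a, b)}) x) :
    (C.attachEdge a b).IsTame (Γ ⊔ SimpleGraph.fromEdgeSet {s(a, b)}) x := by
  have hadj : (Γ ⊔ SimpleGraph.fromEdgeSet {s(a, b)}).Adj a b := by simp [hab]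
  have hsrc : ∀ i, C.src i ≠ b := fun i h => hb _ (h ▸ (hC.adj i).symm)
  have htgt : ∀ i, C.tgt i ≠ b := fun i h => hb _ (h ▸ hC.adj i)
  refine ⟨?_, fun {u v} h => ?_, attachEdge_injective a b hC.injective,
    attachEdge_exact hx hadj hsrc htgt hC.exact,
    fun T => attachEdge_isDualTrivial hx hadj hsrc htgt hC.exact (hC.isDualTrivial _)⟩
  · rintro (_ | i)
    exacts [hadj, Or.inl (hC.adj i)]
  · obtain h | ⟨h, -⟩ := h
    · obtain ⟨i, hi⟩ := hC.exists_edge h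
      exact ⟨some i, hi⟩
    · exact ⟨none, (Set.mem_singleton_iff.1 h).symm⟩

lemma IsTame.attachTriangle (hC : C.IsTame Γ x) {i : C.Edge} {c : V} (hc : ∀ v, ¬Γ.Adj v c)
    (hx : IsRegularLabelling
      (Γ ⊔ SimpleGraph.fromEdgeSet {s(C.src i, c), s(C.tgt i, c)}) x) :
    (C.attachTriangle x i c).IsTame
      (Γ ⊔ SimpleGraph.fromEdgeSet {s(C.src i, c), s(C.tgt i, c)}) x := by
  have hsrc : ∀ j, C.src j ≠ c := fun j h => hc _ (h ▸ (hC.adj j).symm)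
  have htgt : ∀ j, C.tgt j ≠ c := fun j h => hc _ (h ▸ hC.adj j)
  have hab : (Γ ⊔ SimpleGraph.fromEdgeSet {s(C.src i, c), s(C.tgt i, c)}).Adj (C.src i) (C.tgt i) :=
    Or.inl (hC.adj i)
  have hac : (Γ ⊔ SimpleGraph.fromEdgeSet {s(C.src i, c), s(C.tgt i, c)}).Adj (C.src i) c := by
    simp [hsrc]
  have hbc : (Γ ⊔ SimpleGraph.fromEdgeSet {s(C.src i, c), s(C.tgt i, c)}).Adj (C.tgt i) c := by
    simp [htgt]
  refine ⟨?_, fun {u v} h => ?_,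
    attachTriangle_injective (fun _ => hx.eq_zero_of_mul_eq_zero hac) hC.injective,
    attachTriangle_exact hx hab hac hbc hsrc htgt hC.exact,
    fun T => attachTriangle_isDualTrivial hx hab hac hbc hsrc htgt
      hC.exact.linearMap_comp_eq_zero (hC.isDualTrivial _)⟩
  · rintro (_ | _ | j)
    exacts [hac, hbc, Or.inl (hC.adj j)]
  · obtain h | ⟨h | h, -⟩ := h
    · obtain ⟨j, hj⟩ := hC.exists_edge h
      exact ⟨some (some j), hj⟩
    · exact ⟨none, h.symm⟩
    · exact ⟨some none, (Set.mem_singleton_iff.1 h).symm⟩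

lemma IsTame.exists_attachTriangle (hC : C.IsTame Γ x) {a b c : V} (hab : Γ.Adj a b)
    (hc : ∀ v, ¬Γ.Adj v c)
    (hx : IsRegularLabelling (Γ ⊔ SimpleGraph.fromEdgeSet {s(a, c), s(b, c)}) x) :
    ∃ C' : SquareComplex R V,
      C'.IsTame (Γ ⊔ SimpleGraph.fromEdgeSet {s(a, c), s(b, c)}) x := by
  obtain ⟨i, hi⟩ := hC.exists_edge hab
  obtain ⟨rfl, rfl⟩ | ⟨rfl, rfl⟩ := Sym2.eq_iff.1 hi
  · exact ⟨_, hC.attachTriangle hc hx⟩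
  · rw [Set.pair_comm] at hx ⊢
    exact ⟨_, hC.attachTriangle hc hx⟩

/-- The same square complex, over a set of vertices which contains the ends of all edges. -/
abbrev restrict (C : SquareComplex R V) (W : Set V) (hsrc : ∀ i, C.src i ∈ W)
    (htgt : ∀ i, C.tgt i ∈ W) : SquareComplex R W where
  Edge := C.Edge
  Triangle := C.Triangle
  src i := ⟨C.src i, hsrc i⟩
  tgt i := ⟨C.tgt i, htgt i⟩
  boundary := C.boundary

lemma mapDomain_restrict_d₂ {W : Set V} (hsrc : ∀ i, C.src i ∈ W) (htgt : ∀ i, C.tgt i ∈ W)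
    (y : C.Edge →₀ R) :
    ((C.restrict W hsrc htgt).d₂ (fun w : W => x w) y).mapDomain Subtype.val = C.d₂ x y := by
  refine (Finsupp.apply_linearCombination R (Finsupp.lmapDomain R R Subtype.val) _ y).trans ?_
  simp [d₂, Function.comp_def, squareBoundary, Finsupp.mapDomain_single, Finsupp.mapDomain_sub]

lemma IsTame.restrict (hC : C.IsTame Γ x) {W : Set V} (hsrc : ∀ i, C.src i ∈ W)
    (htgt : ∀ i, C.tgt i ∈ W) :
    (C.restrict W hsrc htgt).IsTame (Γ.induce W) (fun w : W => x w) where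
  adj := hC.adj
  exists_edge {u v} h := by
    obtain ⟨i, hi⟩ := hC.exists_edge h
    exact ⟨i, by simpa [Sym2.eq_iff, Subtype.ext_iff] using hi⟩
  injective := hC.injective
  exact y := by
    rw [← (Finsupp.mapDomain_injective Subtype.val_injective).eq_iff, mapDomain_restrict_d₂,
      Finsupp.mapDomain_zero]
    exact hC.exact y
  isDualTrivial T F hF := by
    refine hC.isDualTrivial T F ?_
    rintro ⟨_, hz⟩ ⟨y, rfl⟩
    refine hF _ ⟨fun w => y w, funext fun i => ?_⟩
    exact (transpose_d₂_apply _ i).trans (transpose_d₂_apply y i).symm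

end SquareComplex

lemma IsRegularLabelling.mono {Γ Γ' : SimpleGraph V} {x : V → R} (hx : IsRegularLabelling Γ' x)
    (h : Γ ≤ Γ') : IsRegularLabelling Γ x where
  commute hab := hx.commute (h hab)
  eq_zero_of_mul_eq_zero hab _ := hx.eq_zero_of_mul_eq_zero (h hab)
  exists_of_mul_eq hab _ _ := hx.exists_of_mul_eq (h hab)
  exists_of_mul_eq_left hab _ _ := hx.exists_of_mul_eq_left (h hab)
  mem_span_of_mul_mem hac hbc _ := hx.mem_span_of_mul_mem (h hac) (h hbc)

lemma IsRegularLabelling.of_induce {Γ : SimpleGraph V} {x : V → R} {W : Set V}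
    (hW : ∀ {a b}, Γ.Adj a b → a ∈ W)
    (hx : IsRegularLabelling (Γ.induce W) fun w : W => x w) : IsRegularLabelling Γ x where
  commute {a b} hab := hx.commute (a := ⟨a, hW hab⟩) (b := ⟨b, hW hab.symm⟩) hab
  eq_zero_of_mul_eq_zero {a b} hab _ :=
    hx.eq_zero_of_mul_eq_zero (a := ⟨a, hW hab⟩) (b := ⟨b, hW hab.symm⟩) hab
  exists_of_mul_eq {a b} hab _ _ :=
    hx.exists_of_mul_eq (a := ⟨a, hW hab⟩) (b := ⟨b, hW hab.symm⟩) hab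
  exists_of_mul_eq_left {a b} hab _ _ :=
    hx.exists_of_mul_eq_left (a := ⟨a, hW hab⟩) (b := ⟨b, hW hab.symm⟩) hab
  mem_span_of_mul_mem {a b c} hac hbc _ :=
    hx.mem_span_of_mul_mem (a := ⟨a, hW hac⟩) (b := ⟨b, hW hbc⟩) (c := ⟨c, hW hac.symm⟩) hac hbc

namespace BuiltGraph

variable {S : Finset ℕ} {Γ : SimpleGraph ℕ}

lemma mem_of_adj (h : BuiltGraph S Γ) {a b : ℕ} (hab : Γ.Adj a b) : a ∈ S := by
  induction h generalizing a b with
  | single v => exact hab.elim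
  | attachEdgeAtVertex S Γ _ u v hu _ ih =>
    simp only [SimpleGraph.sup_adj, SimpleGraph.fromEdgeSet_adj, Set.mem_singleton_iff,
      Sym2.eq_iff] at hab
    grind
  | attachTriangleAtVertex S Γ _ u v w hu _ _ _ ih =>
    simp only [SimpleGraph.sup_adj, SimpleGraph.fromEdgeSet_adj, Set.mem_singleton_iff,
      Set.mem_insert_iff, Sym2.eq_iff] at hab
    grind
  | attachTriangleAtEdge S Γ _ u v w hu hv _ _ ih =>
    simp only [SimpleGraph.sup_adj, SimpleGraph.fromEdgeSet_adj, Set.mem_singleton_iff,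
      Set.mem_insert_iff, Sym2.eq_iff] at hab
    grind

lemma not_adj_of_notMem (h : BuiltGraph S Γ) {b : ℕ} (hb : b ∉ S) (a : ℕ) : ¬Γ.Adj a b :=
  fun hab => hb (h.mem_of_adj hab.symm)

lemma exists_isTame (h : BuiltGraph S Γ) {x : ℕ → R} (hx : IsRegularLabelling Γ x) :
    ∃ C : SquareComplex R ℕ, C.IsTame Γ x := by
  induction h with
  | single _ => exact ⟨_, SquareComplex.isTame_empty x⟩
  | attachEdgeAtVertex S Γ hS a b ha hb ih =>
    obtain ⟨C, hC⟩ := ih (hx.mono le_sup_left)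
    exact ⟨_, hC.attachEdge (ne_of_mem_of_not_mem ha hb) (hS.not_adj_of_notMem hb) hx⟩
  | attachTriangleAtVertex S Γ hS a b c ha hb hc hbc ih =>
    have hab := ne_of_mem_of_not_mem ha hb
    rw [← Set.singleton_union, SimpleGraph.fromEdgeSet_union, ← sup_assoc] at hx ⊢
    obtain ⟨C, hC⟩ := ih ((hx.mono le_sup_left).mono le_sup_left)
    have hS' := hS.attachEdgeAtVertex _ _ a b ha hb
    exact (hC.attachEdge hab (hS.not_adj_of_notMem hb)
      (hx.mono le_sup_left)).exists_attachTriangle (by simp [hab])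
      (hS'.not_adj_of_notMem (by simp [hc, hbc.symm])) hx
  | attachTriangleAtEdge S Γ hS a b c _ _ hab hc ih =>
    obtain ⟨C, hC⟩ := ih (hx.mono le_sup_left)
    exact hC.exists_attachTriangle hab (hS.not_adj_of_notMem hc) hx

lemma exists_isTame_induce (h : BuiltGraph S Γ) {x : ↑(↑S : Set ℕ) → R}
    (hx : IsRegularLabelling (Γ.induce ↑S) x) :
    ∃ C : SquareComplex R ↑(↑S : Set ℕ), C.IsTame (Γ.induce ↑S) x := by
  let x' : ℕ → R := Function.extend (↑) x 0
  have hx' : (fun v : ↑(↑S : Set ℕ) => x' v) = x :=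
    funext fun v => Subtype.val_injective.extend_apply x 0 v
  rw [← hx'] at hx ⊢
  obtain ⟨C, hC⟩ := h.exists_isTame (hx.of_induce h.mem_of_adj)
  exact ⟨_, hC.restrict (fun i => h.mem_of_adj (hC.adj i)) fun i => h.mem_of_adj (hC.adj i).symm⟩

end BuiltGraph

end SquareComplex

section CrossedHomomorphism

variable {π}

/-- `D` is the Fox derivative associated with the crossed homomorphism `δ`. -/
lemma exists_addMonoidHom_mul_subOne {M : Type*} [AddCommGroup M] [Module (GroupRing π) M]
    (δ : π → M) (hδ : ∀ g h, δ (g * h) = δ g + MonoidAlgebra.single g (1 : ℤ) • δ h) :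
    ∃ D : GroupRing π →+ M, ∀ r g, D (r * subOne g) = r • δ g := by
  let D : GroupRing π →+ M := (Finsupp.liftAddHom fun g => zmultiplesHom M (δ g)).comp
    MonoidAlgebra.coeffAddEquiv.toAddMonoidHom
  have hD : ∀ g c, D (MonoidAlgebra.single g c) = c • δ g := fun g c => by simp [D]
  refine ⟨D, fun r g => ?_⟩
  induction r using MonoidAlgebra.induction_linear with
  | zero => simp
  | add r s hr hs => rw [add_mul, map_add, hr, hs, add_smul]
  | single h c =>
    have hc : MonoidAlgebra.single h c = c • MonoidAlgebra.single h (1 : ℤ) := by simp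
    rw [subOne, mul_sub, mul_one, MonoidAlgebra.single_mul_single, mul_one, map_sub, hD, hD, hδ,
      smul_add, add_sub_cancel_left, hc, smul_assoc]

end CrossedHomomorphism

namespace RAAGroup

variable {V : Type} {Γ : SimpleGraph V}

lemma closure_range_of : Subgroup.closure (Set.range (of : V → RAAGroup V Γ)) = ⊤ :=
  PresentedGroup.closure_range_of (raagRels V Γ)

lemma exists_hom {H : Type*} [Group H] (f : V → H)
    (hf : ∀ {u v}, Γ.Adj u v → Commute (f u) (f v)) :
    ∃ φ : RAAGroup V Γ →* H, ∀ v, φ (of v) = f v := by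
  have h : ∀ r ∈ raagRels V Γ, FreeGroup.lift f r = 1 := by
    rintro _ ⟨u, v, huv, rfl⟩
    simp [(hf huv).eq]
  exact ⟨PresentedGroup.toGroup h, fun _ => PresentedGroup.toGroup.of h⟩

lemma commute_of {u v : V} (huv : Γ.Adj u v) : Commute (of u : RAAGroup V Γ) (of v) := by
  have h : PresentedGroup.mk (raagRels V Γ) (FreeGroup.of u * FreeGroup.of v *
      (FreeGroup.of u)⁻¹ * (FreeGroup.of v)⁻¹) = 1 :=
    PresentedGroup.one_of_mem ⟨u, v, huv, rfl⟩
  simp only [map_mul, map_inv] at h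
  exact commutatorElement_eq_one_iff_commute.1 h

lemma exists_dual_character (v : V) : ∃ χ : RAAGroup V Γ →* Multiplicative ℤ,
    χ (of v) = Multiplicative.ofAdd 1 ∧ ∀ w ≠ v, χ (of w) = 1 := by
  classical
  obtain ⟨χ, hχ⟩ := exists_hom (Γ := Γ) (Pi.mulSingle v (Multiplicative.ofAdd (1 : ℤ)))
    fun _ => Commute.all _ _
  exact ⟨χ, by rw [hχ, Pi.mulSingle_eq_same], fun w hw => by rw [hχ, Pi.mulSingle_eq_of_ne hw]⟩

/-- The boundary of the edge loop at the vertex `v` in the universal cover of the Salvetti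
complex, with coefficients in `k`. -/
noncomputable abbrev loopBoundary (k : Type*) [Ring k] (Γ : SimpleGraph V) (v : V) :
    MonoidAlgebra k (RAAGroup V Γ) :=
  subOne (of v)

lemma isRegularLabelling_loopBoundary (k : Type*) [Ring k] (Γ : SimpleGraph V) :
    IsRegularLabelling Γ (loopBoundary k Γ) where
  commute hab := subOne_commute (commute_of hab)
  eq_zero_of_mul_eq_zero {a _} _ _ hr := by
    obtain ⟨χ, hχ, -⟩ := exists_dual_character (Γ := Γ) a
    exact eq_zero_of_mul_subOne_eq_zero hχ hr
  exists_of_mul_eq {a b} hab _ _ h := by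
    obtain ⟨χ, hχ, -⟩ := exists_dual_character (Γ := Γ) a
    obtain ⟨ω, hωb, hω⟩ := exists_dual_character (Γ := Γ) b
    exact exists_of_mul_subOne_eq (commute_of hab) hχ hωb (hω a hab.ne) h
  exists_of_mul_eq_left {a b} hab _ _ h := by
    obtain ⟨χ, hχ, -⟩ := exists_dual_character (Γ := Γ) a
    obtain ⟨ω, hωb, hω⟩ := exists_dual_character (Γ := Γ) b
    exact exists_of_subOne_mul_eq (commute_of hab) hχ hωb (hω a hab.ne) h
  mem_span_of_mul_mem {a b c} hac hbc _ h := by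
    obtain ⟨χ, hχc, hχ⟩ := exists_dual_character (Γ := Γ) c
    exact mem_span_of_subOne_mul_mem (commute_of hac) (commute_of hbc) (hχ a hac.ne) (hχ b hbc.ne)
      hχc h

lemma exists_crossedHom {M : Type*} [AddCommGroup M] [DistribMulAction (RAAGroup V Γ) M]
    (m : V → M) (hm : ∀ {u v}, Γ.Adj u v →
      m u + (of u : RAAGroup V Γ) • m v = m v + (of v : RAAGroup V Γ) • m u) :
    ∃ δ : RAAGroup V Γ → M, (∀ g h, δ (g * h) = δ g + g • δ h) ∧ ∀ v, δ (of v) = m v := by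
  let φ : RAAGroup V Γ →* MulAut (Multiplicative M) :=
    (MulAutMultiplicative M).symm.toMonoidHom.comp (DistribMulAction.toAddAut _ M)
  obtain ⟨ψ, hψ⟩ := exists_hom (Γ := Γ) (H := Multiplicative M ⋊[φ] RAAGroup V Γ)
    (fun v => ⟨Multiplicative.ofAdd (m v), of v⟩)
    fun huv => SemidirectProduct.ext (hm huv) (commute_of huv)
  have hright : SemidirectProduct.rightHom.comp ψ = MonoidHom.id _ :=
    PresentedGroup.ext fun v => congrArg SemidirectProduct.right (hψ v)
  refine ⟨fun g => (ψ g).left.toAdd, fun g h => ?_, fun v => by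
    beta_reduce
    rw [hψ, toAdd_ofAdd]⟩
  have hg : (ψ g).right = g := DFunLike.congr_fun hright g
  beta_reduce
  rw [map_mul, SemidirectProduct.mul_left, hg]
  rfl

lemma exists_addMonoidHom_mul_loopBoundary {M : Type*} [AddCommGroup M]
    [Module (GroupRing (RAAGroup V Γ)) M] (m : V → M)
    (hm : ∀ {u v}, Γ.Adj u v → loopBoundary ℤ Γ u • m v = loopBoundary ℤ Γ v • m u) :
    ∃ D : GroupRing (RAAGroup V Γ) →+ M, ∀ r v, D (r * loopBoundary ℤ Γ v) = r • m v := by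
  let _ : DistribMulAction (RAAGroup V Γ) M :=
    DistribMulAction.compHom M (MonoidAlgebra.of ℤ (RAAGroup V Γ))
  obtain ⟨δ, hδ, hδm⟩ := exists_crossedHom (Γ := Γ) m fun {u v} huv => by
    have h := hm huv
    simp only [subOne, sub_smul, one_smul, sub_eq_sub_iff_add_eq_add] at h
    rw [add_comm, add_comm (m v)]
    exact h
  obtain ⟨D, hD⟩ := exists_addMonoidHom_mul_subOne δ hδ
  exact ⟨D, fun r v => by rw [hD, hδm]⟩

lemma span_range_loopBoundary :
    Submodule.span (GroupRing (RAAGroup V Γ)) (Set.range (loopBoundary ℤ Γ)) =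
      Submodule.span (GroupRing (RAAGroup V Γ)) (Set.range subOne) := by
  refine le_antisymm (Submodule.span_mono (Set.range_comp_subset_range of subOne))
    (Submodule.span_le.2 ?_)
  rintro _ ⟨g, rfl⟩
  have hg : g ∈ Subgroup.closure (Set.range (of : V → RAAGroup V Γ)) :=
    closure_range_of ▸ Subgroup.mem_top g
  induction hg using Subgroup.closure_induction with
  | mem g hg =>
    obtain ⟨v, rfl⟩ := hg
    exact Submodule.subset_span ⟨v, rfl⟩
  | one =>
    rw [subOne, ← MonoidAlgebra.one_def, sub_self]
    exact zero_mem _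
  | mul g h _ _ ihg ihh =>
    have hgh : (subOne (g * h) : GroupRing (RAAGroup V Γ)) =
        MonoidAlgebra.single g (1 : ℤ) • subOne h + subOne g := by
      simp [subOne, mul_sub, MonoidAlgebra.single_mul_single]
    rw [hgh]
    exact add_mem (Submodule.smul_mem _ _ ihh) ihg
  | inv g _ ih =>
    have hg : (subOne g⁻¹ : GroupRing (RAAGroup V Γ)) =
        -(MonoidAlgebra.single g⁻¹ (1 : ℤ) • subOne g) := by
      simp [subOne, mul_sub, MonoidAlgebra.single_mul_single, MonoidAlgebra.one_def]
    rw [hg]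
    exact neg_mem (Submodule.smul_mem _ _ ih)

end RAAGroup

section Augmentation

lemma barD_zero :
    barD π 0 = Finsupp.lsingle default ∘ₗ
      Finsupp.linearCombination (GroupRing π) fun u : Fin 1 → π => subOne (u 0) := by
  refine Finsupp.lhom_ext' fun u => LinearMap.ext_ring <| Finsupp.unique_ext ?_
  rw [LinearMap.comp_apply, Finsupp.lsingle_apply, barD_single,
    Subsingleton.elim (fun i : Fin 0 => u i.succ) default, Fin.sum_univ_one,
    Subsingleton.elim (Fin.contractNth 0 _ u) default]
  simp [subOne, sub_eq_add_neg]

lemma range_barD_zero :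
    LinearMap.range (barD π 0) = (Submodule.span (GroupRing π) (Set.range subOne)).map
      (Finsupp.lsingle default) := by
  have h : Set.range (fun u : Fin 1 → π => (subOne (u 0) : GroupRing π)) = Set.range subOne :=
    (Equiv.funUnique (Fin 1) π).surjective.range_comp subOne
  rw [barD_zero, LinearMap.range_comp, Finsupp.range_linearCombination, h]

end Augmentation

namespace SquareComplex

section Exact

variable {R V : Type*} [Ring R] {C : SquareComplex R V} {x : V → R}

lemma linearCombination_comp_d₂ (hx : ∀ i, Commute (x (C.src i)) (x (C.tgt i))) :
    Finsupp.linearCombination R x ∘ₗ C.d₂ x = 0 :=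
  Finsupp.lhom_ext' fun i => LinearMap.ext_ring <| by
    simp [d₂_single, squareBoundary, (hx i).eq]

lemma exact_linearCombination (hx : ∀ i, Commute (x (C.src i)) (x (C.tgt i)))
    (D : R →+ (V →₀ R) ⧸ LinearMap.range (C.d₂ x))
    (hD : ∀ r v, D (r * x v) = r • Submodule.Quotient.mk (Finsupp.single v 1)) :
    Function.Exact (C.d₂ x) (Finsupp.linearCombination R x) := by
  have hDy : ∀ y, D (Finsupp.linearCombination R x y) = Submodule.Quotient.mk y := fun y => by
    induction y using Finsupp.induction_linear with
    | zero => simp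
    | add y z hy hz => rw [map_add, map_add, hy, hz, Submodule.Quotient.mk_add]
    | single v r =>
      rw [Finsupp.linearCombination_single, smul_eq_mul, hD, ← Submodule.Quotient.mk_smul,
        Finsupp.smul_single, smul_eq_mul, mul_one]
  refine LinearMap.exact_of_comp_of_mem_range (linearCombination_comp_d₂ hx) fun y hy => ?_
  rw [← Submodule.Quotient.mk_eq_zero, ← hDy, hy, map_zero]

end Exact

end SquareComplex

namespace SquareComplex

variable {V : Type}

section Tame

variable {R : Type*} [Ring R] {C : SquareComplex R V} {Γ : SimpleGraph V} {x : V → R}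

lemma IsTame.eq_zero_of_surjective (hC : C.IsTame Γ x) {A : Type*} [AddCommGroup A]
    [Module Rᵐᵒᵖ A] {q : LinearMap.ker (transpose C.d₃) →ₗ[Rᵐᵒᵖ] A} (hq : Function.Surjective q)
    (hq₀ : ∀ z, z.1 ∈ LinearMap.range (transpose (C.d₂ x)) → q z = 0) (f : A →ₗ[Rᵐᵒᵖ] R) :
    f = 0 := by
  have h : LinearMap.ker (transpose C.d₃) ≤ C.constrainedCocycles x ∅ := fun _ hz =>
    mem_constrainedCocycles.2 ⟨hz, fun _ hi => hi.elim⟩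
  have h' : C.constrainedCocycles x ∅ ≤ LinearMap.ker (transpose C.d₃) := inf_le_left
  have hf := hC.isDualTrivial ∅ (f ∘ₗ q ∘ₗ Submodule.inclusion h') fun z hz => by
    rw [LinearMap.comp_apply, LinearMap.comp_apply, hq₀ _ hz, map_zero]
  refine LinearMap.ext fun a => ?_
  obtain ⟨z, rfl⟩ := hq a
  exact DFunLike.congr_fun hf ⟨z, h z.2⟩

end Tame

variable {Γ : SimpleGraph V} {C : SquareComplex (GroupRing (RAAGroup V Γ)) V}

lemma IsTame.exact_linearCombination (hC : C.IsTame Γ (RAAGroup.loopBoundary ℤ Γ)) :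
    Function.Exact (C.d₂ (RAAGroup.loopBoundary ℤ Γ))
      (Finsupp.linearCombination (GroupRing (RAAGroup V Γ)) (RAAGroup.loopBoundary ℤ Γ)) := by
  let x : V → GroupRing (RAAGroup V Γ) := RAAGroup.loopBoundary ℤ Γ
  let m : V → (V →₀ GroupRing (RAAGroup V Γ)) ⧸ LinearMap.range (C.d₂ x) :=
    fun v => Submodule.Quotient.mk (Finsupp.single v 1)
  have hm (i : C.Edge) : x (C.src i) • m (C.tgt i) = x (C.tgt i) • m (C.src i) := by
    rw [← sub_eq_zero]
    refine (Submodule.Quotient.mk_eq_zero _).2 ⟨Finsupp.single i 1, ?_⟩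
    simp [d₂_single, squareBoundary]
  obtain ⟨D, hD⟩ := RAAGroup.exists_addMonoidHom_mul_loopBoundary m fun {u v} huv => by
    obtain ⟨i, hi⟩ := hC.exists_edge huv
    obtain ⟨rfl, rfl⟩ | ⟨rfl, rfl⟩ := Sym2.eq_iff.1 hi
    exacts [hm i, (hm i).symm]
  exact SquareComplex.exact_linearCombination
    (fun i => subOne_commute (RAAGroup.commute_of (hC.adj i))) D hD

lemma IsTame.nonempty_complexComparison (hC : C.IsTame Γ (RAAGroup.loopBoundary ℤ Γ)) :
    Nonempty (ComplexComparison (barD (RAAGroup V Γ) 1) (barD _ 2) (barD _ 3)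
      (C.d₂ (RAAGroup.loopBoundary ℤ Γ)) C.d₃) := by
  refine _root_.nonempty_complexComparison (barD_exact _ 0) (barD_exact _ 1) (barD_exact _ 2)
    ((Finsupp.single_injective default).comp_exact_iff_exact (i := Finsupp.lsingle default) |>.2
      hC.exact_linearCombination) hC.exact hC.injective ?_
  rw [range_barD_zero, LinearMap.range_comp, Finsupp.range_linearCombination,
    RAAGroup.span_range_loopBoundary]

end SquareComplex

/-- Let `Γ` be a simplicial graph obtained from a single vertex by finitely
many operations of attaching a 1- or 2-simplex along a vertex, or a 2-simplex along an edge.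
Then the right-angled Artin group `π` defined by `Γ` has tame cohomology:
`Hom_Λ(H²(π; Λ), Λ) = 0`, `Hom_Λ(H³(π; Λ), Λ) = 0` and `Ext¹_Λ(H³(π; Λ), Λ) = 0`. -/
theorem statement7 (S : Finset ℕ) (Γ : SimpleGraph ℕ) (hbuilt : BuiltGraph S Γ) :
    (∀ f : groupCohΛ (RAAGroup ↑(↑S : Set ℕ) (Γ.induce ↑S)) 2
        →ₗ[(GroupRing (RAAGroup ↑(↑S : Set ℕ) (Γ.induce ↑S)))ᵐᵒᵖ]
        GroupRing (RAAGroup ↑(↑S : Set ℕ) (Γ.induce ↑S)), f = 0) ∧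
    (∀ f : groupCohΛ (RAAGroup ↑(↑S : Set ℕ) (Γ.induce ↑S)) 3
        →ₗ[(GroupRing (RAAGroup ↑(↑S : Set ℕ) (Γ.induce ↑S)))ᵐᵒᵖ]
        GroupRing (RAAGroup ↑(↑S : Set ℕ) (Γ.induce ↑S)), f = 0) ∧
    Subsingleton (extGroup (GroupRing (RAAGroup ↑(↑S : Set ℕ) (Γ.induce ↑S)))ᵐᵒᵖ
      (groupCohΛ (RAAGroup ↑(↑S : Set ℕ) (Γ.induce ↑S)) 3)
      (GroupRing (RAAGroup ↑(↑S : Set ℕ) (Γ.induce ↑S))) 1) := by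
  obtain ⟨C, hC⟩ := hbuilt.exists_isTame_induce (RAAGroup.isRegularLabelling_loopBoundary ℤ _)
  obtain ⟨K⟩ := hC.nonempty_complexComparison
  obtain ⟨q₂, hq₂, hq₂_zero⟩ := K.exists_surjective_groupCohΛ_two
  obtain ⟨q₃, hq₃, hker⟩ := K.exists_surjective_groupCohΛ_three hC.injective
  exact ⟨hC.eq_zero_of_surjective hq₂ hq₂_zero,
    eq_zero_of_ker_eq_range_transpose hC.injective hq₃ hker,
    subsingleton_extGroup_one hq₃ (exists_extension_of_ker_eq_range_transpose hC.exact hker)⟩
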